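/- arXiv:1512.05056 — 5 statements merged into one kernel-verified Lean document; each statement's English description precedes it below -/
import Mathlib

section
/- Uniqueness of solutions to the hydrodynamic PDE: let λ be a nonnegative locally integrable function on [0,∞), let g be a nonnegative locally integrable probability density on [0,∞) with ∫₀^∞ g(x)dx = 1 and ∫₀^∞ x g(x)dx = 1, let Ḡ(x) = ∫ₓ^∞ g(y)dy, and suppose there is a constant H < ∞ with g(x) ≤ H·Ḡ(x) for all x ≥ 0. Let Z⁰_ℓ (ℓ ≥ 1) be continuously differentiable functions on [0,∞) with bounded derivative and |Z⁰_ℓ| ≤ 1. If (Z_ℓ; ℓ ≥ 1) and (Z̃_ℓ; ℓ ≥ 1) are both solutions of the hydrodynamic PDE associated to (λ, (Z⁰_ℓ)), then Z_ℓ(t,r) = Z̃_ℓ(t,r) for every ℓ ≥ 1 and all t, r ≥ 0. -/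
open MeasureTheory Set

/-- A family `(Z ℓ; ℓ ≥ 1)` of functions on `[0,∞) × [0,∞)` solves the hydrodynamic PDE
associated to the arrival rate `lam`, complementary service distribution `Gbar` and
initial data `(Z0 ℓ; ℓ ≥ 1)`. Here `∂_r Z ℓ (u, 0)` is formalized as
`derivWithin (Z ℓ u) (Set.Ici 0) 0`, the derivative of `r ↦ Z ℓ u r` at `r = 0`
(from within the domain `[0,∞)`). -/
structure IsHydroSol (lam Gbar : ℝ → ℝ) (Z0 : ℕ → ℝ → ℝ) (Z : ℕ → ℝ → ℝ → ℝ) : Prop where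
  regular : ∀ ℓ ≥ 1, ∀ t ≥ (0:ℝ),
    ContDiffOn ℝ 1 (Z ℓ t) (Ici 0) ∧
    (∃ M : ℝ, ∀ r ≥ (0:ℝ), |derivWithin (Z ℓ t) (Ici 0) r| ≤ M) ∧
    (∀ r ≥ (0:ℝ), |Z ℓ t r| ≤ 1)
  meas : ∀ ℓ ≥ 1, ∀ r ≥ (0:ℝ), Measurable fun t => Z ℓ t r
  eq_one : ∀ t ≥ (0:ℝ), ∀ r ≥ (0:ℝ),
    Z 1 t r = Z0 1 (t + r)
      - (∫ u in (0:ℝ)..t, Gbar (t + r - u) * derivWithin (Z 2 u) (Ici 0) 0)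
      + ∫ u in (0:ℝ)..t, lam u * Gbar (t + r - u) * (1 - (Z 1 u 0) ^ 2)
  bc_one : ∀ t ≥ (0:ℝ),
    Z 1 t 0 = Z0 1 0
      + (∫ u in (0:ℝ)..t,
          (derivWithin (Z 1 u) (Ici 0) 0 - derivWithin (Z 2 u) (Ici 0) 0))
      + ∫ u in (0:ℝ)..t, lam u * (1 - (Z 1 u 0) ^ 2)
  eq_ell : ∀ ℓ ≥ 2, ∀ t ≥ (0:ℝ), ∀ r ≥ (0:ℝ),
    Z ℓ t r = Z0 ℓ (t + r)
      - (∫ u in (0:ℝ)..t, Gbar (t + r - u) * derivWithin (Z (ℓ + 1) u) (Ici 0) 0)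
      + ∫ u in (0:ℝ)..t, lam u * (Z (ℓ - 1) u 0 + Z ℓ u 0) *
          (Z (ℓ - 1) u (t + r - u) - Z ℓ u (t + r - u))
  bc_ell : ∀ ℓ ≥ 2, ∀ t ≥ (0:ℝ),
    Z ℓ t 0 = Z0 ℓ 0
      + (∫ u in (0:ℝ)..t,
          (derivWithin (Z ℓ u) (Ici 0) 0 - derivWithin (Z (ℓ + 1) u) (Ici 0) 0))
      + ∫ u in (0:ℝ)..t, lam u * ((Z (ℓ - 1) u 0) ^ 2 - (Z ℓ u 0) ^ 2)

theorem hyd_contr {ι : Type*} (f : ι → ℝ) (C : ℝ) (hb : ∃ N, ∀ x, f x ≤ N)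
    (h : ∀ N, (∀ x, f x ≤ N) → ∀ x, f x ≤ C + N / 2) : ∀ x, f x ≤ 2 * C := by
  intro x
  obtain ⟨N, hN⟩ := hb
  have hbd : BddAbove (range f) := ⟨N, by rintro _ ⟨y, rfl⟩; exact hN y⟩
  have h1 : ∀ y, f y ≤ sSup (range f) := fun y => le_csSup hbd ⟨y, rfl⟩
  have h2 := h _ h1
  have h3 : sSup (range f) ≤ C + sSup (range f) / 2 :=
    csSup_le ⟨_, ⟨x, rfl⟩⟩ (by rintro _ ⟨y, rfl⟩; exact h2 y)
  have := h1 x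
  linarith

theorem hyd_byparts (G : ℝ → ℝ) (H : ℝ) (hH : 0 ≤ H) (hG : ∀ x y, |G x - G y| ≤ H * |x - y|)
    (e : ℝ → ℝ) {a t : ℝ} (hat : a ≤ t) (he : IntervalIntegrable e volume a t) (K : ℝ)
    (hK : ∀ s ∈ Icc a t, |∫ u in a..s, e u| ≤ K) (x : ℝ) :
    |(∫ u in a..t, G (x - u) * e u) - G (x - t) * ∫ u in a..t, e u| ≤ H * K * (t - a) := by
  have hK0 : 0 ≤ K := (abs_nonneg _).trans (hK a ⟨le_rfl, hat⟩)
  have hlip : LipschitzWith ⟨H, hH⟩ (fun u => G (x - u)) := by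
    refine LipschitzWith.of_dist_le_mul fun u v => ?_
    rw [Real.dist_eq, Real.dist_eq]
    refine (hG _ _).trans (le_of_eq ?_)
    have : x - u - (x - v) = -(u - v) := by ring
    rw [this, abs_neg]; rfl
  have hac : AbsolutelyContinuousOnInterval (fun u => G (x - u)) a t :=
    (hlip.lipschitzOnWith (s := uIcc a t)).absolutelyContinuousOnInterval
  have hac2 : AbsolutelyContinuousOnInterval (fun s => ∫ u in a..s, e u) a t :=
    he.absolutelyContinuousOnInterval_intervalIntegral (c := a) (by simp)
  have h1 := hac.integral_mul_deriv_eq_deriv_mul hac2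
  have h2 : ∫ u in a..t, G (x - u) * e u =
      ∫ u in a..t, G (x - u) * deriv (fun s => ∫ u in a..s, e u) u := by
    apply intervalIntegral.integral_congr_ae
    filter_upwards [he.ae_hasDerivAt_integral] with u hu hu2
    rw [(hu (uIoc_subset_uIcc hu2) a (by simp)).deriv]
  rw [h2, h1]
  simp only [intervalIntegral.integral_same, mul_zero, sub_zero]
  rw [sub_sub_cancel_left, abs_neg]
  have := intervalIntegral.norm_integral_le_of_norm_le_const (a := a) (b := t) (C := H * K)
    (f := fun u => deriv (fun u => G (x - u)) u * ∫ v in a..u, e v) ?_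
  · rwa [abs_of_nonneg (sub_nonneg.2 hat)] at this
  · intro u hu
    rw [uIoc_of_le hat] at hu
    rw [norm_mul]
    apply mul_le_mul _ (hK u ⟨hu.1.le, hu.2⟩) (abs_nonneg _) hH
    exact norm_deriv_le_of_lipschitz hlip

theorem hyd_transport (G : ℝ → ℝ) (H : ℝ) (hH : 0 ≤ H)
    (hG : ∀ x y, |G x - G y| ≤ H * |x - y|) (hG0 : G 0 = 1)
    {a b : ℝ} (lam e e' : ℝ → ℝ) (D F : ℝ → ℝ → ℝ) (N P : ℝ)
    (hlam : IntervalIntegrable lam volume a b) (hlam0 : ∀ u ∈ Icc a b, 0 ≤ lam u)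
    (he : IntervalIntegrable e volume a b) (he' : IntervalIntegrable e' volume a b)
    (hF : ∀ t ∈ Icc a b, ∀ x ≥ t, IntervalIntegrable (fun u => lam u * F u (x - u)) volume a t)
    (hF0 : IntervalIntegrable (fun u => lam u * F u 0) volume a b)
    (hrep : ∀ t ∈ Icc a b, ∀ r ≥ (0:ℝ), D t r = -(∫ u in a..t, G (t + r - u) * e u)
      + ∫ u in a..t, lam u * F u (t + r - u))
    (hDlip : ∀ t ∈ Icc a b, ∀ r ≥ (0:ℝ), |D t r - D t 0| ≤ N * r)
    (hFlip : ∀ t ∈ Icc a b, ∀ r ≥ (0:ℝ), |F t r - F t 0| ≤ P * r)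
    (hder : ∀ t ∈ Icc a b, HasDerivWithinAt (D t) (e' t) (Ici 0) 0) :
    ∀ t ∈ Icc a b, ∫ u in a..t, e' u = (∫ u in a..t, (1 - G (t - u)) * e u)
      + ∫ u in a..t, lam u * (F u (t - u) - F u 0) := by
  have hGc : Continuous G := by
    have : LipschitzWith ⟨H, hH⟩ G := LipschitzWith.of_dist_le_mul fun u v => by
      rw [Real.dist_eq, Real.dist_eq]; exact hG u v
    exact this.continuous
  have sub : ∀ {s t : ℝ}, s ∈ Icc a b → t ∈ Icc a b → uIcc s t ⊆ uIcc a b := by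
    intro s t hs ht
    rw [uIcc_of_le (hs.1.trans hs.2)]
    exact uIcc_subset_Icc hs ht
  have hGe : ∀ {s t : ℝ}, s ∈ Icc a b → t ∈ Icc a b → ∀ x,
      IntervalIntegrable (fun u => G (x - u) * e u) volume s t := fun hs ht x =>
    (he.mono_set (sub hs ht)).continuousOn_mul (by fun_prop)
  set ψ : ℝ → ℝ := fun t => D t 0 - (∫ u in a..t, lam u * F u 0) + ∫ u in a..t, e u with hψ
  set k : ℝ → ℝ := fun u => H * |e u| + P * lam u with hk
  have hki : IntervalIntegrable k volume a b := (he.abs.const_mul H).add (hlam.const_mul P)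
  set R : ℝ → ℝ := fun t => ∫ u in a..t, k u with hR
  have key : ∀ t ∈ Icc a b, ∀ s ∈ Icc a b, t ≤ s →
      |ψ s - ψ t - (D t (s - t) - D t 0)| ≤ (s - t) * (R s - R t) := by
    intro t ht s hs hts
    have haa : a ∈ Icc a b := ⟨le_rfl, ht.1.trans ht.2⟩
    have hFs := hF s hs s le_rfl
    have hFt := hF t ht s hts
    have hFts : IntervalIntegrable (fun u => lam u * F u (s - u)) volume t s := hFt.symm.trans hFs
    have hF0' : ∀ {s t : ℝ}, s ∈ Icc a b → t ∈ Icc a b →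
      IntervalIntegrable (fun u => lam u * F u 0) volume s t := fun hs ht => hF0.mono_set (sub hs ht)
    have he1 : ∀ {s t : ℝ}, s ∈ Icc a b → t ∈ Icc a b →
      IntervalIntegrable e volume s t := fun hs ht => he.mono_set (sub hs ht)
    have r1 := hrep s hs 0 le_rfl
    have r2 := hrep t ht (s - t) (by simpa using hts)
    simp only [add_zero, add_sub_cancel] at r1 r2
    have i1 : ∫ u in a..s, G (s - u) * e u = (∫ u in a..t, G (s - u) * e u)
        + ∫ u in t..s, G (s - u) * e u :=
      (intervalIntegral.integral_add_adjacent_intervals (hGe haa ht s) (hGe ht hs s)).symm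
    have i2 : ∫ u in a..s, lam u * F u (s - u) = (∫ u in a..t, lam u * F u (s - u))
        + ∫ u in t..s, lam u * F u (s - u) :=
      (intervalIntegral.integral_add_adjacent_intervals hFt hFts).symm
    have i3 : ∫ u in a..s, lam u * F u 0 = (∫ u in a..t, lam u * F u 0)
        + ∫ u in t..s, lam u * F u 0 :=
      (intervalIntegral.integral_add_adjacent_intervals (hF0' haa ht) (hF0' ht hs)).symm
    have i4 : ∫ u in a..s, e u = (∫ u in a..t, e u) + ∫ u in t..s, e u :=
      (intervalIntegral.integral_add_adjacent_intervals (he1 haa ht) (he1 ht hs)).symm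
    have i5 : R s - R t = ∫ u in t..s, k u := by
      have := intervalIntegral.integral_add_adjacent_intervals
        (hki.mono_set (sub haa ht)) (hki.mono_set (sub ht hs))
      simp only [hR]; linarith
    have e1 : ψ s - ψ t - (D t (s - t) - D t 0) =
        ∫ u in t..s, (e u - G (s - u) * e u) + (lam u * F u (s - u) - lam u * F u 0) := by
      rw [intervalIntegral.integral_add ((he1 ht hs).sub (hGe ht hs s)) (hFts.sub (hF0' ht hs)),
        intervalIntegral.integral_sub (he1 ht hs) (hGe ht hs s),
        intervalIntegral.integral_sub hFts (hF0' ht hs)]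
      simp only [hψ]
      rw [r1, r2, i1, i2, i3, i4]
      ring
    rw [e1, i5, ← intervalIntegral.integral_const_mul, ← Real.norm_eq_abs]
    refine intervalIntegral.norm_integral_le_of_norm_le hts ?_ ((hki.mono_set (sub ht hs)).const_mul _)
    refine Filter.Eventually.of_forall fun u hu => ?_
    have hu' : u ∈ Icc a b := ⟨ht.1.trans hu.1.le, hu.2.trans hs.2⟩
    have b1 : |1 - G (s - u)| ≤ H * (s - t) := by
      rw [← hG0]
      refine (hG _ _).trans (mul_le_mul_of_nonneg_left ?_ hH)
      rw [zero_sub, abs_neg, abs_of_nonneg (by linarith [hu.2])]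
      linarith [hu.1]
    have b2 : |F u (s - u) - F u 0| ≤ P * (s - t) := by
      have hP : 0 ≤ P := by simpa using (abs_nonneg _).trans (hFlip u hu' 1 zero_le_one)
      refine (hFlip u hu' (s - u) (by simpa using hu.2)).trans (mul_le_mul_of_nonneg_left ?_ hP)
      linarith [hu.1]
    have e2 : (e u - G (s - u) * e u) + (lam u * F u (s - u) - lam u * F u 0)
      = (1 - G (s - u)) * e u + lam u * (F u (s - u) - F u 0) := by ring
    rw [Real.norm_eq_abs, e2]
    refine (abs_add_le _ _).trans ?_
    rw [abs_mul, abs_mul, abs_of_nonneg (hlam0 u hu')]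
    have := mul_le_mul_of_nonneg_right b1 (abs_nonneg (e u))
    have := mul_le_mul_of_nonneg_left b2 (hlam0 u hu')
    simp only [hk]
    nlinarith
  intro t ht
  have hab : a ≤ b := ht.1.trans ht.2
  have haa : a ∈ Icc a b := ⟨le_rfl, hab⟩
  have hRc : ContinuousOn R (Icc a b) := by
    have := intervalIntegral.continuousOn_primitive_interval (μ := volume) (f := k) (a := a) (b := b)
      (by rw [uIcc_of_le hab]; exact (intervalIntegrable_iff_integrableOn_Icc_of_le hab).1 hki)
    rwa [uIcc_of_le hab] at this
  obtain ⟨M, hM⟩ := (isCompact_Icc.bddAbove_image hRc.norm)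
  have hM' : ∀ s ∈ Icc a b, |R s| ≤ M := fun s hs => hM ⟨s, hs, rfl⟩
  have hM0 : 0 ≤ M := (abs_nonneg _).trans (hM' a haa)
  have hN0 : 0 ≤ N := by simpa using (abs_nonneg _).trans (hDlip a haa 1 zero_le_one)
  have one : ∀ s ∈ Icc a b, ∀ v ∈ Icc a b, s ≤ v → |ψ v - ψ s| ≤ (N + 2 * M) * |v - s| := by
    intro s hs v hv hsv
    have k1 := key s hs v hv hsv
    have k2 := hDlip s hs (v - s) (by simpa using hsv)
    have k3 : (v - s) * (R v - R s) ≤ (v - s) * (2 * M) := by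
      apply mul_le_mul_of_nonneg_left _ (by linarith)
      have := abs_le.1 (hM' v hv); have := abs_le.1 (hM' s hs); linarith
    rw [abs_of_nonneg (by linarith : 0 ≤ v - s)]
    have := abs_le.1 k1; have := abs_le.1 k2
    rw [abs_le]; constructor <;> nlinarith
  have hψc : ContinuousOn ψ (Icc a b) := by
    have : LipschitzOnWith ⟨N + 2 * M, by positivity⟩ ψ (Icc a b) := by
      refine LipschitzOnWith.of_dist_le_mul fun s hs v hv => ?_
      rw [Real.dist_eq, Real.dist_eq]
      rcases le_total s v with h | h
      · rw [abs_sub_comm, abs_sub_comm s v]; exact one s hs v hv h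
      · exact one v hv s hs h
    exact this.continuousOn
  have hψd : ∀ s ∈ Ioo a t, HasDerivWithinAt ψ (e' s) (Ioi s) s := by
    intro s hs
    have hsI : s ∈ Icc a b := ⟨hs.1.le, hs.2.le.trans ht.2⟩
    have hA : HasDerivWithinAt (fun v => D s (v - s)) (e' s) (Ioi s) s := by
      have h0 := hder s hsI
      have h1 : HasDerivWithinAt (fun v : ℝ => v - s) 1 (Ioi s) s :=
        ((hasDerivAt_id s).sub_const s).hasDerivWithinAt
      have := HasDerivWithinAt.comp (s' := Ici 0) (h₂ := D s) (h₂' := e' s) s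
        (by simpa using h0) h1
        (fun v hv => by simpa using (le_of_lt hv))
      rw [mul_one] at this
      exact this
    have hB : HasDerivWithinAt (fun v => ψ v - D s (v - s)) 0 (Ioi s) s := by
      rw [hasDerivWithinAt_iff_isLittleO]
      rw [Asymptotics.isLittleO_iff]
      intro c hc
      have hcont : ContinuousWithinAt R (Ioi s) s := by
        refine (hRc s hsI).mono_of_mem_nhdsWithin ?_
        exact Filter.mem_of_superset (Ioo_mem_nhdsGT (hs.2.trans_le ht.2))
          (fun v hv => ⟨hs.1.le.trans hv.1.le, hv.2.le⟩)
      have ev := (Metric.tendsto_nhds.1 hcont) c hc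
      filter_upwards [ev, Ioo_mem_nhdsGT (hs.2.trans_le ht.2)] with v hv hv2
      have k1 := key s hsI v ⟨hs.1.le.trans hv2.1.le, hv2.2.le⟩ hv2.1.le
      rw [Real.dist_eq] at hv
      simp only [sub_self, smul_zero, sub_zero, Real.norm_eq_abs]
      have : ψ v - D s (v - s) - (ψ s - D s 0) = ψ v - ψ s - (D s (v - s) - D s 0) := by ring
      rw [this, abs_of_pos (sub_pos.2 hv2.1)]
      refine k1.trans ?_
      rw [mul_comm]
      exact mul_le_mul_of_nonneg_right ((le_abs_self _).trans hv.le) (sub_pos.2 hv2.1).le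
    have := hA.add hB
    simpa [Pi.add_def] using this
  have fin := intervalIntegral.integral_eq_sub_of_hasDeriv_right_of_le ht.1
    (hψc.mono (Icc_subset_Icc_right ht.2)) hψd (he'.mono_set (sub haa ht))
  rw [fin]
  have r0 := hrep a haa 0 le_rfl
  have r1 := hrep t ht 0 le_rfl
  simp only [add_zero] at r0 r1
  simp only [intervalIntegral.integral_same] at r0
  have hFt := hF t ht t le_rfl
  have hF0t := hF0.mono_set (sub haa ht)
  have het := he.mono_set (sub haa ht)
  have j1 : ∫ u in a..t, (1 - G (t - u)) * e u = (∫ u in a..t, e u) - ∫ u in a..t, G (t - u) * e u := by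
    rw [← intervalIntegral.integral_sub het (hGe haa ht t)]
    congr 1; ext u; ring
  have j2 : ∫ u in a..t, lam u * (F u (t - u) - F u 0) =
      (∫ u in a..t, lam u * F u (t - u)) - ∫ u in a..t, lam u * F u 0 := by
    rw [← intervalIntegral.integral_sub hFt hF0t]
    congr 1; ext u; ring
  rw [j1, j2]
  simp only [hψ, intervalIntegral.integral_same, r0, r1]
  ring

theorem hyd_gbar (g Gbar : ℝ → ℝ) (H : ℝ)
    (hg_nonneg : ∀ x ≥ (0:ℝ), 0 ≤ g x)
    (hg_int : IntegrableOn g (Ici 0))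
    (hg_prob : ∫ x in Ici (0:ℝ), g x = 1)
    (hGbar : ∀ x ≥ (0:ℝ), Gbar x = ∫ y in Ioi x, g y)
    (hhaz : ∀ x ≥ (0:ℝ), g x ≤ H * Gbar x) :
    ∃ G : ℝ → ℝ, (∀ x ≥ (0:ℝ), G x = Gbar x) ∧ 0 ≤ H ∧ G 0 = 1 ∧
      (∀ x y, |G x - G y| ≤ H * |x - y|) ∧ (∀ x, 0 < G x) ∧ (∀ x, G x ≤ 1) := by
  have h0 : Gbar 0 = 1 := by rw [hGbar 0 le_rfl, ← hg_prob, integral_Ici_eq_integral_Ioi]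
  have hH : 0 ≤ H := by
    have h1 := hhaz 0 le_rfl
    have h2 := hg_nonneg 0 le_rfl
    rw [h0] at h1; linarith
  have hgi : ∀ x ≥ (0:ℝ), IntegrableOn g (Ioi x) := fun x hx =>
    hg_int.mono_set (fun y hy => hx.le.trans (le_of_lt hy))
  have hnn : ∀ x ≥ (0:ℝ), 0 ≤ Gbar x := fun x hx => by
    rw [hGbar x hx]
    exact setIntegral_nonneg measurableSet_Ioi (fun y hy => hg_nonneg y (hx.le.trans (le_of_lt hy)))
  have hdiff : ∀ x ≥ (0:ℝ), ∀ y ≥ x, Gbar x - Gbar y = ∫ u in x..y, g u := by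
    intro x hx y hxy
    have hy : (0:ℝ) ≤ y := hx.le.trans hxy
    rw [hGbar x hx, hGbar y hy, intervalIntegral.integral_of_le hxy]
    have : Ioi x = Ioc x y ∪ Ioi y := (Ioc_union_Ioi_eq_Ioi hxy).symm
    rw [this, setIntegral_union (by
      rw [Set.disjoint_left]; intro u hu hu2; exact absurd hu.2 (not_le.2 hu2)) measurableSet_Ioi
      ((hgi x hx).mono_set Ioc_subset_Ioi_self) (hgi y hy)]
    ring
  have hgii : ∀ x ≥ (0:ℝ), ∀ y ≥ x, IntervalIntegrable g volume x y := fun x hx y hxy =>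
    (intervalIntegrable_iff_integrableOn_Ioc_of_le hxy).2 ((hgi x hx).mono_set Ioc_subset_Ioi_self)
  have hanti : ∀ x ≥ (0:ℝ), ∀ y ≥ x, Gbar y ≤ Gbar x := by
    intro x hx y hxy
    have : 0 ≤ ∫ u in x..y, g u :=
      intervalIntegral.integral_nonneg hxy (fun u hu => hg_nonneg u (hx.le.trans hu.1))
    linarith [hdiff x hx y hxy]
  have hd2 : ∀ x ≥ (0:ℝ), ∀ y ≥ x, Gbar x - Gbar y ≤ H * Gbar x * (y - x) := by
    intro x hx y hxy
    rw [hdiff x hx y hxy]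
    have : ∫ u in x..y, g u ≤ ∫ u in x..y, H * Gbar x := by
      apply intervalIntegral.integral_mono_on hxy (hgii x hx y hxy) (by simp)
      intro u hu
      exact (hhaz u (hx.le.trans hu.1)).trans
        (mul_le_mul_of_nonneg_left (hanti x hx u hu.1) hH)
    simp at this
    linarith
  have hle1 : ∀ x ≥ (0:ℝ), Gbar x ≤ 1 := fun x hx => h0 ▸ hanti 0 le_rfl x hx
  have hlip : ∀ x ≥ (0:ℝ), ∀ y ≥ x, |Gbar x - Gbar y| ≤ H * (y - x) := by
    intro x hx y hxy
    rw [abs_of_nonneg (by linarith [hanti x hx y hxy])]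
    refine (hd2 x hx y hxy).trans ?_
    have : H * Gbar x ≤ H := by nlinarith [hle1 x hx]
    exact mul_le_mul_of_nonneg_right this (by linarith)
  have hpos : ∀ x ≥ (0:ℝ), 0 < Gbar x := by
    set δ := 1 / (2 * (H + 1)) with hδ
    have hδ0 : 0 < δ := by positivity
    have hδ1 : H * δ ≤ 1 / 2 := by
      rw [hδ, mul_one_div, div_le_div_iff₀ (by positivity) (by norm_num)]; linarith
    have step : ∀ n : ℕ, 0 < Gbar (n * δ) := by
      intro n
      induction n with
      | zero => simp [h0]
      | succ n ih =>
        have h1 : (0:ℝ) ≤ n * δ := by positivity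
        have := hd2 (n * δ) h1 ((n + 1 : ℕ) * δ) (by push_cast; nlinarith)
        push_cast at this ⊢
        have e : ((n:ℝ) + 1) * δ - n * δ = δ := by ring
        rw [e] at this
        nlinarith
    intro x hx
    obtain ⟨n, hn⟩ := exists_nat_ge (x / δ)
    have : x ≤ n * δ := by rwa [div_le_iff₀ hδ0] at hn
    exact (step n).trans_le (hanti x hx _ this)
  refine ⟨fun x => Gbar (max x 0), fun x hx => by simp [max_eq_left hx.le], hH, by simp [h0], ?_,
    fun x => hpos _ (le_max_right _ _), fun x => hle1 _ (le_max_right _ _)⟩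
  intro x y
  have h3 : |max x 0 - max y 0| ≤ |x - y| := abs_max_sub_max_le_abs x y 0
  refine le_trans ?_ (mul_le_mul_of_nonneg_left h3 hH)
  rcases le_total (max x 0) (max y 0) with h | h
  · have := hlip _ (le_max_right x 0) _ h
    rwa [abs_sub_comm (max x 0), abs_of_nonneg (sub_nonneg.2 h)]
  · have := hlip _ (le_max_right y 0) _ h
    rwa [abs_sub_comm, abs_of_nonneg (sub_nonneg.2 h)]

/-- The source term. -/
def hydF (G : ℝ → ℝ) (Z : ℕ → ℝ → ℝ → ℝ) (ℓ : ℕ) (u r : ℝ) : ℝ :=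
  if ℓ = 1 then G r * (1 - (Z 1 u 0) ^ 2)
  else (Z (ℓ - 1) u 0 + Z ℓ u 0) * (Z (ℓ - 1) u r - Z ℓ u r)

structure HydSys (lam G : ℝ → ℝ) (H : ℝ) (Z0 : ℕ → ℝ → ℝ) : Prop where
  lam0 : ∀ t ≥ (0:ℝ), 0 ≤ lam t
  lamI : ∀ s ≥ (0:ℝ), ∀ t ≥ (0:ℝ), IntervalIntegrable lam volume s t
  H0 : 0 ≤ H
  G0 : G 0 = 1
  Glip : ∀ x y, |G x - G y| ≤ H * |x - y|
  Gpos : ∀ x, 0 < G x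
  Gle : ∀ x, G x ≤ 1
  Z0lip : ∀ ℓ ≥ 1, ∃ N ≥ (0:ℝ), ∀ r ≥ (0:ℝ), ∀ r' ≥ (0:ℝ), |Z0 ℓ r - Z0 ℓ r'| ≤ N * |r - r'|

structure HydSol (lam G : ℝ → ℝ) (Z0 : ℕ → ℝ → ℝ) (Z : ℕ → ℝ → ℝ → ℝ)
    (d : ℕ → ℝ → ℝ) : Prop where
  dmeas : ∀ ℓ ≥ 1, AEStronglyMeasurable (d ℓ) (volume.restrict (Ici 0))
  hd : ∀ ℓ ≥ 1, ∀ t ≥ (0:ℝ), HasDerivWithinAt (Z ℓ t) (d ℓ t) (Ici 0) 0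
  lip : ∀ ℓ ≥ 1, ∀ t ≥ (0:ℝ), ∃ N ≥ (0:ℝ), ∀ r ≥ (0:ℝ), ∀ r' ≥ (0:ℝ),
    |Z ℓ t r - Z ℓ t r'| ≤ N * |r - r'|
  bd : ∀ ℓ ≥ 1, ∀ t ≥ (0:ℝ), ∀ r ≥ (0:ℝ), |Z ℓ t r| ≤ 1
  FI : ∀ ℓ ≥ 1, ∀ x ≥ (0:ℝ),
    IntervalIntegrable (fun u => lam u * hydF G Z ℓ u (x - u)) volume 0 x
  FI0 : ∀ ℓ ≥ 1, ∀ x ≥ (0:ℝ),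
    IntervalIntegrable (fun u => lam u * hydF G Z ℓ u 0) volume 0 x
  eq : ∀ ℓ ≥ 1, ∀ t ≥ (0:ℝ), ∀ r ≥ (0:ℝ), Z ℓ t r = Z0 ℓ (t + r)
    - (∫ u in (0:ℝ)..t, G (t + r - u) * d (ℓ + 1) u)
    + ∫ u in (0:ℝ)..t, lam u * hydF G Z ℓ u (t + r - u)

theorem hyd_c1_lip (f : ℝ → ℝ) (h1 : ContDiffOn ℝ 1 f (Ici 0))
    (h2 : ∃ M : ℝ, ∀ r ≥ (0:ℝ), |derivWithin f (Ici 0) r| ≤ M) :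
    ∃ N ≥ (0:ℝ), ∀ r ≥ (0:ℝ), ∀ r' ≥ (0:ℝ), |f r - f r'| ≤ N * |r - r'| := by
  obtain ⟨M, hM⟩ := h2
  refine ⟨M, (abs_nonneg _).trans (hM 0 le_rfl), fun r hr r' hr' => ?_⟩
  exact (convex_Ici (0:ℝ)).norm_image_sub_le_of_norm_derivWithin_le
    (h1.differentiableOn (by norm_num)) (fun x hx => hM x hx) hr' hr

theorem hyd_meas_diag (Z : ℝ → ℝ → ℝ) (hm : ∀ r ≥ (0:ℝ), Measurable fun t => Z t r)
    (hc : ∀ t ≥ (0:ℝ), ContinuousOn (Z t) (Ici 0)) (x : ℝ) :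
    AEStronglyMeasurable (fun u => Z u (x - u)) (volume.restrict (Icc 0 x)) := by
  have hmn : ∀ n : ℕ, Measurable (fun u => Z u ((⌊(x - u) * n⌋₊ : ℝ) / n)) := by
    intro n
    have h1 : Measurable (fun p : ℝ × ℕ => Z p.1 ((p.2 : ℝ) / n)) :=
      measurable_from_prod_countable_left (fun k => hm ((k:ℝ) / n) (by positivity))
    have h2 : Measurable (fun u : ℝ => (u, ⌊(x - u) * n⌋₊)) :=
      measurable_id.prodMk (Nat.measurable_floor.comp (by fun_prop))
    exact h1.comp h2
  refine aestronglyMeasurable_of_tendsto_ae Filter.atTop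
    (f := fun n : ℕ => fun u => Z u ((⌊(x - u) * n⌋₊ : ℝ) / n))
    (fun n => (hmn n).aestronglyMeasurable) ?_
  refine (ae_restrict_iff' measurableSet_Icc).2 (Filter.Eventually.of_forall fun u hu => ?_)
  have hxu : 0 ≤ x - u := by linarith [hu.2]
  have t1 : Filter.Tendsto (fun n : ℕ => (⌊(x - u) * n⌋₊ : ℝ) / n) Filter.atTop (nhds (x - u)) :=
    (tendsto_nat_floor_mul_div_atTop hxu).comp tendsto_natCast_atTop_atTop
  have t2 : Filter.Tendsto (fun n : ℕ => (⌊(x - u) * n⌋₊ : ℝ) / n) Filter.atTop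
      (nhdsWithin (x - u) (Ici 0)) :=
    tendsto_nhdsWithin_iff.2 ⟨t1, Filter.Eventually.of_forall fun n => by
      simp only [mem_Ici]; positivity⟩
  exact (hc u hu.1 (x - u) hxu).tendsto.comp t2

theorem hyd_meas_d (Z : ℝ → ℝ → ℝ) (hm : ∀ r ≥ (0:ℝ), Measurable fun t => Z t r) (d : ℝ → ℝ)
    (hd : ∀ t ≥ (0:ℝ), HasDerivWithinAt (Z t) (d t) (Ici 0) 0) :
    AEStronglyMeasurable d (volume.restrict (Ici 0)) := by
  refine aestronglyMeasurable_of_tendsto_ae Filter.atTop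
    (f := fun n : ℕ => fun u => ((1:ℝ) / (n + 1))⁻¹ * (Z u (1 / ((n:ℝ) + 1)) - Z u 0))
    (fun n => (((hm _ (by positivity)).sub (hm _ le_rfl)).const_mul _).aestronglyMeasurable) ?_
  refine (ae_restrict_iff' measurableSet_Ici).2 (Filter.Eventually.of_forall fun u hu => ?_)
  have h1 := (hasDerivWithinAt_iff_tendsto_slope).1 (hd u hu)
  have t2 : Filter.Tendsto (fun n : ℕ => (1:ℝ) / (n + 1)) Filter.atTop
      (nhdsWithin 0 (Ici 0 \ {0})) :=
    tendsto_nhdsWithin_iff.2 ⟨tendsto_one_div_add_atTop_nhds_zero_nat,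
      Filter.Eventually.of_forall fun n => by
        have : (0:ℝ) < 1 / (n + 1) := by positivity
        exact ⟨this.le, this.ne'⟩⟩
  refine (h1.comp t2).congr fun n => ?_
  simp [slope_def_field, div_eq_inv_mul]

theorem hyd_F_bd (G : ℝ → ℝ) (Z : ℕ → ℝ → ℝ → ℝ) (hG : ∀ x, 0 < G x) (hG1 : ∀ x, G x ≤ 1)
    (hb : ∀ ℓ ≥ 1, ∀ t ≥ (0:ℝ), ∀ r ≥ (0:ℝ), |Z ℓ t r| ≤ 1) :
    ∀ ℓ ≥ 1, ∀ t ≥ (0:ℝ), ∀ r ≥ (0:ℝ), |hydF G Z ℓ t r| ≤ 4 := by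
  intro ℓ hℓ t ht r hr
  unfold hydF
  split_ifs with h
  · have := abs_le.1 (hb 1 le_rfl t ht 0 le_rfl)
    have h1 := hG r
    have h2 := hG1 r
    have h3 : |1 - Z 1 t 0 ^ 2| ≤ 1 := by rw [abs_le]; constructor <;> nlinarith
    rw [abs_mul, abs_of_pos h1]
    nlinarith [abs_nonneg (1 - Z 1 t 0 ^ 2)]
  · have h2 : 1 ≤ ℓ - 1 := by omega
    have a1 := hb _ h2 t ht 0 le_rfl
    have a2 := hb _ h2 t ht r hr
    have a3 := hb _ hℓ t ht 0 le_rfl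
    have a4 := hb _ hℓ t ht r hr
    rw [abs_mul]
    have b1 := (abs_add_le (Z (ℓ - 1) t 0) (Z ℓ t 0))
    have b2 := (abs_sub (Z (ℓ - 1) t r) (Z ℓ t r))
    have : |Z (ℓ - 1) t 0 + Z ℓ t 0| * |Z (ℓ - 1) t r - Z ℓ t r| ≤ 2 * 2 :=
      mul_le_mul (by linarith) (by linarith) (abs_nonneg _) (by norm_num)
    linarith

theorem hyd_FI (lam G : ℝ → ℝ) (Z : ℕ → ℝ → ℝ → ℝ)
    (hlamI : ∀ s ≥ (0:ℝ), ∀ t ≥ (0:ℝ), IntervalIntegrable lam volume s t)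
    (hGc : Continuous G)
    (hG : ∀ x, 0 < G x) (hG1 : ∀ x, G x ≤ 1)
    (hb : ∀ ℓ ≥ 1, ∀ t ≥ (0:ℝ), ∀ r ≥ (0:ℝ), |Z ℓ t r| ≤ 1)
    (hm : ∀ ℓ ≥ 1, ∀ r ≥ (0:ℝ), Measurable fun t => Z ℓ t r)
    (ρ : ℝ → ℝ) (x : ℝ) (hx : 0 ≤ x) (hρ : Measurable ρ) (hρ0 : ∀ u ∈ Icc 0 x, 0 ≤ ρ u)
    (hd : ∀ ℓ ≥ 1, AEStronglyMeasurable (fun u => Z ℓ u (ρ u)) (volume.restrict (Icc 0 x))) :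
    ∀ ℓ ≥ 1, IntervalIntegrable (fun u => lam u * hydF G Z ℓ u (ρ u)) volume 0 x := by
  intro ℓ hℓ
  rw [intervalIntegrable_iff_integrableOn_Icc_of_le hx]
  have h1 : IntegrableOn lam (Icc 0 x) :=
    (intervalIntegrable_iff_integrableOn_Icc_of_le hx).1 (hlamI 0 le_rfl x hx)
  have hm0 : ∀ ℓ ≥ 1, AEStronglyMeasurable (fun u => Z ℓ u 0) (volume.restrict (Icc 0 x)) :=
    fun ℓ hℓ => (hm ℓ hℓ 0 le_rfl).aestronglyMeasurable
  refine Integrable.mul_bdd (c := 4) h1 ?_ ?_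
  · unfold hydF
    split_ifs with h
    · exact ((hGc.measurable.comp hρ).aestronglyMeasurable).mul
        (aestronglyMeasurable_const.sub ((hm0 1 le_rfl).pow 2))
    · have h2 : 1 ≤ ℓ - 1 := by omega
      exact ((hm0 _ h2).add (hm0 _ hℓ)).mul ((hd _ h2).sub (hd _ hℓ))
  · refine (ae_restrict_iff' measurableSet_Icc).2 (Filter.Eventually.of_forall fun u hu => ?_)
    exact hyd_F_bd G Z hG hG1 hb ℓ hℓ u hu.1 _ (hρ0 u hu)

theorem hyd_conv (lam Gbar G : ℝ → ℝ) (Z0 : ℕ → ℝ → ℝ) (H : ℝ) (hS : HydSys lam G H Z0)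
    (hGG : ∀ x ≥ (0:ℝ), G x = Gbar x) (Z : ℕ → ℝ → ℝ → ℝ) (hZ : IsHydroSol lam Gbar Z0 Z) :
    HydSol lam G Z0 Z (fun ℓ u => derivWithin (Z ℓ u) (Ici 0) 0) := by
  have hGc : Continuous G := by
    have : LipschitzWith ⟨H, hS.H0⟩ G := LipschitzWith.of_dist_le_mul fun u v => by
      rw [Real.dist_eq, Real.dist_eq]; exact hS.Glip u v
    exact this.continuous
  have hd : ∀ ℓ ≥ 1, ∀ t ≥ (0:ℝ),
      HasDerivWithinAt (Z ℓ t) (derivWithin (Z ℓ t) (Ici 0) 0) (Ici 0) 0 := fun ℓ hℓ t ht =>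
    (((hZ.regular ℓ hℓ t ht).1.differentiableOn (by norm_num)) 0 self_mem_Ici).hasDerivWithinAt
  have hb : ∀ ℓ ≥ 1, ∀ t ≥ (0:ℝ), ∀ r ≥ (0:ℝ), |Z ℓ t r| ≤ 1 :=
    fun ℓ hℓ t ht => (hZ.regular ℓ hℓ t ht).2.2
  refine ⟨fun ℓ hℓ => hyd_meas_d (Z ℓ) (hZ.meas ℓ hℓ) _ (hd ℓ hℓ), hd,
    fun ℓ hℓ t ht => hyd_c1_lip _ (hZ.regular ℓ hℓ t ht).1 (hZ.regular ℓ hℓ t ht).2.1, hb, ?_, ?_, ?_⟩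
  · intro ℓ hℓ x hx
    exact hyd_FI lam G Z hS.lamI hGc hS.Gpos hS.Gle hb hZ.meas (fun u => x - u) x hx (by fun_prop)
      (fun u hu => by linarith [hu.2])
      (fun ℓ hℓ => hyd_meas_diag (Z ℓ) (hZ.meas ℓ hℓ)
        (fun t ht => (hZ.regular ℓ hℓ t ht).1.continuousOn) x) ℓ hℓ
  · intro ℓ hℓ x hx
    exact hyd_FI lam G Z hS.lamI hGc hS.Gpos hS.Gle hb hZ.meas (fun u => 0) x hx (by fun_prop)
      (fun u hu => le_rfl) (fun ℓ hℓ => (hZ.meas ℓ hℓ 0 le_rfl).aestronglyMeasurable) ℓ hℓ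
  · intro ℓ hℓ t ht r hr
    have c1 : ∫ u in (0:ℝ)..t, G (t + r - u) * derivWithin (Z (ℓ + 1) u) (Ici 0) 0 =
        ∫ u in (0:ℝ)..t, Gbar (t + r - u) * derivWithin (Z (ℓ + 1) u) (Ici 0) 0 := by
      apply intervalIntegral.integral_congr
      intro u hu
      rw [uIcc_of_le ht] at hu
      simp only
      rw [hGG _ (by linarith [hu.2])]
    rw [c1]
    by_cases h : ℓ = 1
    · subst h
      have c2 : ∫ u in (0:ℝ)..t, lam u * hydF G Z 1 u (t + r - u) =
          ∫ u in (0:ℝ)..t, lam u * Gbar (t + r - u) * (1 - (Z 1 u 0) ^ 2) := by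
        apply intervalIntegral.integral_congr
        intro u hu
        rw [uIcc_of_le ht] at hu
        simp only [hydF, if_true]
        rw [hGG _ (by linarith [hu.2]), mul_assoc]
      rw [c2]
      exact hZ.eq_one t ht r hr
    · have c2 : ∫ u in (0:ℝ)..t, lam u * hydF G Z ℓ u (t + r - u) =
          ∫ u in (0:ℝ)..t, lam u * (Z (ℓ - 1) u 0 + Z ℓ u 0) *
          (Z (ℓ - 1) u (t + r - u) - Z ℓ u (t + r - u)) := by
        congr 1; ext u
        simp only [hydF, if_neg h, mul_assoc]
      rw [c2]
      exact hZ.eq_ell ℓ (by omega) t ht r hr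

def hydLip (Z : ℕ → ℝ → ℝ → ℝ) (ℓ : ℕ) (a b N : ℝ) : Prop :=
  ∀ u ∈ Icc a b, ∀ r ≥ (0:ℝ), ∀ r' ≥ (0:ℝ), |Z ℓ u r - Z ℓ u r'| ≤ N * |r - r'|

def hydGood (d : ℕ → ℝ → ℝ) (k : ℕ) (t : ℝ) : Prop := IntervalIntegrable (d k) volume 0 t

theorem hydGood_mono {d : ℕ → ℝ → ℝ} {k : ℕ} {s t : ℝ} (hs : 0 ≤ s) (hst : s ≤ t)
    (h : hydGood d k t) : hydGood d k s :=
  IntervalIntegrable.mono_set h (by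
    rw [uIcc_of_le hs, uIcc_of_le (hs.trans hst)]; exact Icc_subset_Icc_right hst)

theorem hydGood_sub {d : ℕ → ℝ → ℝ} {k : ℕ} {s t : ℝ} (hs : 0 ≤ s) (hst : s ≤ t)
    (h : hydGood d k t) : IntervalIntegrable (d k) volume s t :=
  IntervalIntegrable.mono_set h (by
    rw [uIcc_of_le hst, uIcc_of_le (hs.trans hst)]; exact Icc_subset_Icc_left hs)

theorem HydSys.Gc {lam G : ℝ → ℝ} {H : ℝ} {Z0 : ℕ → ℝ → ℝ} (hS : HydSys lam G H Z0) :
    Continuous G := by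
  have : LipschitzWith ⟨H, hS.H0⟩ G := LipschitzWith.of_dist_le_mul fun u v => by
    rw [Real.dist_eq, Real.dist_eq]; exact hS.Glip u v
  exact this.continuous

theorem hyd_bad_int {lam G : ℝ → ℝ} {H : ℝ} {Z0 : ℕ → ℝ → ℝ} (hS : HydSys lam G H Z0)
    {d : ℕ → ℝ → ℝ} {k : ℕ} {t : ℝ} (h : ¬ hydGood d k t) (x : ℝ) :
    ∫ u in (0:ℝ)..t, G (x - u) * d k u = 0 := by
  apply intervalIntegral.integral_undef
  intro hi
  apply h
  have hc : Continuous (fun u => (G (x - u))⁻¹) :=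
    (hS.Gc.comp (continuous_const.sub continuous_id)).inv₀ (fun u => (hS.Gpos _).ne')
  have := hi.continuousOn_mul (hc.continuousOn)
  refine this.congr (fun u _ => ?_)
  have := (hS.Gpos (x - u)).ne'
  field_simp

theorem hyd_good_of_bdd {lam G : ℝ → ℝ} {Z0 : ℕ → ℝ → ℝ} {Z : ℕ → ℝ → ℝ → ℝ} {d : ℕ → ℝ → ℝ}
    (hZ : HydSol lam G Z0 Z d) {k : ℕ} (hk : 1 ≤ k) {a b N : ℝ} (ha : 0 ≤ a) (hab : a ≤ b)
    (h : hydGood d k a) (hb : ∀ u ∈ Ioo a b, |d k u| ≤ N) : hydGood d k b := by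
  refine IntervalIntegrable.trans h ?_
  rw [intervalIntegrable_iff_integrableOn_Ioo_of_le hab]
  have hfin : IsFiniteMeasure (volume.restrict (Ioo a b)) := ⟨by simp⟩
  refine Integrable.of_bound ((hZ.dmeas k hk).mono_measure
    (Measure.restrict_mono (fun u (hu : u ∈ Ioo a b) => ha.trans hu.1.le) le_rfl)) N ?_
  exact (ae_restrict_iff' measurableSet_Ioo).2 (Filter.Eventually.of_forall hb)

theorem hyd_d_bound {lam G : ℝ → ℝ} {Z0 : ℕ → ℝ → ℝ} {Z : ℕ → ℝ → ℝ → ℝ} {d : ℕ → ℝ → ℝ}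
    (hZ : HydSol lam G Z0 Z d) {k : ℕ} (hk : 1 ≤ k) {a b N : ℝ} (ha : 0 ≤ a)
    (h : hydLip Z k a b N) : ∀ u ∈ Icc a b, |d k u| ≤ N := by
  intro u hu
  have h1 := (hasDerivWithinAt_iff_tendsto_slope).1 (hZ.hd k hk u (ha.trans hu.1))
  have hse : Ici (0:ℝ) \ {0} = Ioi 0 := by
    ext y
    simp only [mem_sdiff, mem_Ici, mem_singleton_iff, mem_Ioi]
    exact ⟨fun h => lt_of_le_of_ne h.1 (Ne.symm h.2), fun h => ⟨h.le, h.ne'⟩⟩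
  rw [hse] at h1
  refine le_of_tendsto h1.abs ?_
  filter_upwards [self_mem_nhdsWithin] with r hr
  have hr0 : 0 < r := hr
  rw [slope_def_field, abs_div, div_le_iff₀ (by simpa using hr0.ne')]
  exact h u hu r hr0.le 0 le_rfl

theorem hyd_F_lip {lam G : ℝ → ℝ} {H : ℝ} {Z0 : ℕ → ℝ → ℝ} {Z : ℕ → ℝ → ℝ → ℝ} {d : ℕ → ℝ → ℝ}
    (hS : HydSys lam G H Z0) (hZ : HydSol lam G Z0 Z d) {ℓ : ℕ} (hℓ : 1 ≤ ℓ) {u r r' N : ℝ}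
    (hu : 0 ≤ u) (hN : 0 ≤ N)
    (h : 2 ≤ ℓ → |Z (ℓ - 1) u r - Z (ℓ - 1) u r'| ≤ N * |r - r'|) :
    |hydF G Z ℓ u r - hydF G Z ℓ u r'| ≤ (H + 2 * N) * |r - r'| + 2 * |Z ℓ u r - Z ℓ u r'| := by
  have hH := hS.H0
  have hrr := abs_nonneg (r - r')
  unfold hydF
  split_ifs with h1
  · subst h1
    have := abs_le.1 (hZ.bd 1 le_rfl u hu 0 le_rfl)
    have h3 : |1 - Z 1 u 0 ^ 2| ≤ 1 := by rw [abs_le]; constructor <;> nlinarith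
    rw [← sub_mul, abs_mul]
    have h4 := hS.Glip r r'
    have h5 : |G r - G r'| * |1 - Z 1 u 0 ^ 2| ≤ (H * |r - r'|) * 1 :=
      mul_le_mul h4 h3 (abs_nonneg _) (by positivity)
    have : 0 ≤ N * |r - r'| := by positivity
    have := abs_nonneg (Z 1 u r - Z 1 u r')
    nlinarith
  · have h2 : 1 ≤ ℓ - 1 := by omega
    have a0 := h (by omega)
    have a1 := hZ.bd _ h2 u hu 0 le_rfl
    have a3 := hZ.bd _ hℓ u hu 0 le_rfl
    have b1 := (abs_add_le (Z (ℓ - 1) u 0) (Z ℓ u 0))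
    rw [← mul_sub, abs_mul]
    have e : Z (ℓ - 1) u r - Z ℓ u r - (Z (ℓ - 1) u r' - Z ℓ u r') =
      (Z (ℓ - 1) u r - Z (ℓ - 1) u r') - (Z ℓ u r - Z ℓ u r') := by ring
    rw [e]
    have b2 := abs_sub (Z (ℓ - 1) u r - Z (ℓ - 1) u r') (Z ℓ u r - Z ℓ u r')
    have : |Z (ℓ - 1) u 0 + Z ℓ u 0| * |(Z (ℓ - 1) u r - Z (ℓ - 1) u r') - (Z ℓ u r - Z ℓ u r')|
       ≤ 2 * (N * |r - r'| + |Z ℓ u r - Z ℓ u r'|) :=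
      mul_le_mul (by linarith) (by linarith) (abs_nonneg _) (by norm_num)
    have : 0 ≤ H * |r - r'| := by positivity
    nlinarith

theorem hyd_Q_lip {lam G : ℝ → ℝ} {H : ℝ} {Z0 : ℕ → ℝ → ℝ}
    (hS : HydSys lam G H Z0) (d : ℕ → ℝ → ℝ) (k : ℕ) {t : ℝ} (ht : 0 ≤ t) (x x' : ℝ) :
    |(∫ u in (0:ℝ)..t, G (x - u) * d k u) - ∫ u in (0:ℝ)..t, G (x' - u) * d k u|
      ≤ H * |x - x'| * ∫ u in (0:ℝ)..t, |d k u| := by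
  by_cases hg : hydGood d k t
  · have hg' : IntervalIntegrable (d k) volume 0 t := hg
    have hc : ∀ x, Continuous (fun u => G (x - u)) := fun x =>
      hS.Gc.comp (continuous_const.sub continuous_id)
    rw [← intervalIntegral.integral_sub (hg'.continuousOn_mul (hc x).continuousOn)
      (hg'.continuousOn_mul (hc x').continuousOn), ← intervalIntegral.integral_const_mul]
    rw [← Real.norm_eq_abs]
    refine intervalIntegral.norm_integral_le_of_norm_le ht ?_ (hg'.abs.const_mul _)
    refine Filter.Eventually.of_forall fun u hu => ?_
    rw [← sub_mul, norm_mul]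
    refine mul_le_mul_of_nonneg_right ?_ (norm_nonneg _)
    have := hS.Glip (x - u) (x' - u)
    rwa [sub_sub_sub_cancel_right] at this
  · rw [hyd_bad_int hS hg, hyd_bad_int hS hg, sub_zero, abs_zero]
    have : 0 ≤ ∫ u in (0:ℝ)..t, |d k u| :=
      intervalIntegral.integral_nonneg ht (fun _ _ => abs_nonneg _)
    have := hS.H0
    positivity

theorem hyd_core {lam G : ℝ → ℝ} {H : ℝ} {Z0 : ℕ → ℝ → ℝ} {Z : ℕ → ℝ → ℝ → ℝ} {d : ℕ → ℝ → ℝ}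
    (hS : HydSys lam G H Z0) (hZ : HydSol lam G Z0 Z d) {ℓ : ℕ} (hℓ : 1 ≤ ℓ) {a : ℝ} (ha : 0 ≤ a) :
    ∃ c ≥ (0:ℝ), ∀ b ≥ a, ∀ q N I : ℝ, 0 ≤ N → 0 ≤ I → (∫ u in a..b, lam u) ≤ q → q ≤ 1 / 4 →
      (2 ≤ ℓ → hydLip Z (ℓ - 1) a b N) →
      ((hydGood d (ℓ + 1) b ∧ (∫ u in a..b, |d (ℓ + 1) u|) ≤ I) ∨
        ∀ t ∈ Ioc a b, ¬ hydGood d (ℓ + 1) t) →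
      hydLip Z ℓ a b (2 * (c + H * I + (H + 2 * N) * q)) := by
  obtain ⟨c0, hc0, hZ0⟩ := hS.Z0lip ℓ hℓ
  obtain ⟨La, hLa, hZa⟩ := hZ.lip ℓ hℓ a ha
  have hH := hS.H0
  set J := ∫ u in (0:ℝ)..a, |d (ℓ + 1) u| with hJ
  have hJ0 : 0 ≤ J := intervalIntegral.integral_nonneg ha (fun _ _ => abs_nonneg _)
  refine ⟨2 * c0 + La + 2 * H * J, by positivity, ?_⟩
  intro b hab q N I hN hI hq hq4 hlip hgb
  set R : ℝ → ℝ := fun x => ∫ u in (0:ℝ)..a, lam u * hydF G Z ℓ u (x - u) with hR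
  have hRlip : ∀ x ≥ a, ∀ x' ≥ a, |R x - R x'| ≤ (La + c0 + H * J) * |x - x'| := by
    intro x hx x' hx'
    have e1 := hZ.eq ℓ hℓ a ha (x - a) (by simpa using hx)
    have e2 := hZ.eq ℓ hℓ a ha (x' - a) (by simpa using hx')
    simp only [add_sub_cancel] at e1 e2
    have hQ := abs_le.1 (hyd_Q_lip hS d (ℓ + 1) ha x x')
    have h1 := abs_le.1 (hZ0 x (ha.trans hx) x' (ha.trans hx'))
    have h2 := hZa (x - a) (by simpa using hx) (x' - a) (by simpa using hx')
    rw [sub_sub_sub_cancel_right] at h2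
    have h2 := abs_le.1 h2
    have e1' : R x = Z ℓ a (x - a) - Z0 ℓ x + ∫ u in (0:ℝ)..a, G (x - u) * d (ℓ + 1) u := by
      simp only [hR]; linarith
    have e2' : R x' = Z ℓ a (x' - a) - Z0 ℓ x' + ∫ u in (0:ℝ)..a, G (x' - u) * d (ℓ + 1) u := by
      simp only [hR]; linarith
    rw [e1', e2', abs_le]
    constructor <;> nlinarith
  have hQ : ∀ t ∈ Icc a b, ∀ x x', |(∫ u in (0:ℝ)..t, G (x - u) * d (ℓ + 1) u)
      - ∫ u in (0:ℝ)..t, G (x' - u) * d (ℓ + 1) u| ≤ H * (J + I) * |x - x'| := by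
    intro t ht x x'
    have h1 := hyd_Q_lip hS d (ℓ + 1) (ha.trans ht.1) x x'
    have hx := abs_nonneg (x - x')
    rcases hgb with hgb | hgb
    · have h2 : ∫ u in (0:ℝ)..t, |d (ℓ + 1) u| ≤ J + I := by
        have g1 := hydGood_mono (ha.trans ht.1) ht.2 hgb.1
        have g2 := hydGood_mono ha hab hgb.1
        have i1 := intervalIntegral.integral_add_adjacent_intervals
          (hydGood_mono ha ht.1 g1).abs (hydGood_sub ha ht.1 g1).abs
        have i2 := intervalIntegral.integral_add_adjacent_intervals
          (hydGood_sub ha ht.1 g1).abs (hydGood_sub (ha.trans ht.1) ht.2 hgb.1).abs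
        have : 0 ≤ ∫ u in t..b, |d (ℓ + 1) u| :=
          intervalIntegral.integral_nonneg ht.2 (fun _ _ => abs_nonneg _)
        linarith [hgb.2]
      refine h1.trans ?_
      have : 0 ≤ H * |x - x'| := by positivity
      nlinarith
    · rcases eq_or_lt_of_le ht.1 with h | h
      · subst h
        refine h1.trans ?_
        have : 0 ≤ H * |x - x'| * I := by positivity
        nlinarith
      · have hb := hgb t ⟨h, ht.2⟩
        rw [hyd_bad_int hS hb, hyd_bad_int hS hb, sub_zero, abs_zero]
        positivity
  intro u0 hu0 r hr r' hr'
  set x := u0 + r with hx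
  set x' := u0 + r' with hx'
  have hxx : x - x' = r - r' := by rw [hx, hx']; ring
  have main := hyd_contr (ι := Icc a u0) (fun v => |Z ℓ v (x - v) - Z ℓ v (x' - v)|)
    ((2 * c0 + La + 2 * H * J + H * I + (H + 2 * N) * q) * |r - r'|) ?_ ?_
  · have := main ⟨u0, hu0.1, le_rfl⟩
    simp only [hx, hx', add_sub_cancel_left] at this
    linarith
  · refine ⟨2, fun v => ?_⟩
    have hv0 : (0:ℝ) ≤ v := ha.trans v.2.1
    have h1 := hZ.bd ℓ hℓ v hv0 (x - v) (by have := v.2.2; linarith)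
    have h2 := hZ.bd ℓ hℓ v hv0 (x' - v) (by have := v.2.2; linarith)
    have := abs_sub (Z ℓ v (x - v)) (Z ℓ v (x' - v))
    linarith
  · rintro M hM ⟨v, hv⟩
    show |Z ℓ v (x - v) - Z ℓ v (x' - v)| ≤ _
    have hM' : ∀ w ∈ Icc a u0, |Z ℓ w (x - w) - Z ℓ w (x' - w)| ≤ M := fun w hw => hM ⟨w, hw⟩
    have hM0 : 0 ≤ M := (abs_nonneg _).trans (hM' v hv)
    have hv0 : (0:ℝ) ≤ v := ha.trans hv.1
    have e1 := hZ.eq ℓ hℓ v hv0 (x - v) (by linarith [hv.2])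
    have e2 := hZ.eq ℓ hℓ v hv0 (x' - v) (by linarith [hv.2])
    simp only [add_sub_cancel] at e1 e2
    have hvb : v ∈ Icc a b := ⟨hv.1, hv.2.trans hu0.2⟩
    have sI : ∀ y ≥ v, ∀ s ∈ Icc 0 v, ∀ t ∈ Icc 0 v,
        IntervalIntegrable (fun u => lam u * hydF G Z ℓ u (y - u)) volume s t := by
      intro y hy s hs t ht
      refine (hZ.FI ℓ hℓ y (hv0.trans hy)).mono_set ?_
      rw [uIcc_of_le (hv0.trans hy)]
      exact uIcc_subset_Icc ⟨hs.1, hs.2.trans hy⟩ ⟨ht.1, ht.2.trans hy⟩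
    have sp : ∀ y ≥ v, ∫ u in (0:ℝ)..v, lam u * hydF G Z ℓ u (y - u) =
        R y + ∫ u in a..v, lam u * hydF G Z ℓ u (y - u) := fun y hy =>
      (intervalIntegral.integral_add_adjacent_intervals
        (sI y hy 0 ⟨le_rfl, hv0⟩ a ⟨ha, hv.1⟩) (sI y hy a ⟨ha, hv.1⟩ v ⟨hv0, le_rfl⟩)).symm
    have hxv : x ≥ v := by linarith [hv.2]
    have hxv' : x' ≥ v := by linarith [hv.2]
    rw [sp x hxv] at e1
    rw [sp x' hxv'] at e2
    have b1 := hZ0 x (hv0.trans hxv) x' (hv0.trans hxv')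
    have b2 := hQ v hvb x x'
    have b3 := hRlip x (hv.1.trans hxv) x' (hv.1.trans hxv')
    have b4 : |(∫ u in a..v, lam u * hydF G Z ℓ u (x - u))
        - ∫ u in a..v, lam u * hydF G Z ℓ u (x' - u)| ≤ ((H + 2 * N) * |x - x'| + 2 * M) * q := by
      rw [← intervalIntegral.integral_sub (sI x hxv a ⟨ha, hv.1⟩ v ⟨hv0, le_rfl⟩)
        (sI x' hxv' a ⟨ha, hv.1⟩ v ⟨hv0, le_rfl⟩)]
      have lI := hS.lamI a ha v hv0
      have : ‖∫ u in a..v, (lam u * hydF G Z ℓ u (x - u) - lam u * hydF G Z ℓ u (x' - u))‖ ≤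
          ∫ u in a..v, ((H + 2 * N) * |x - x'| + 2 * M) * lam u := by
        refine intervalIntegral.norm_integral_le_of_norm_le hv.1 ?_ (lI.const_mul _)
        refine Filter.Eventually.of_forall fun w hw => ?_
        have hw0 : 0 ≤ w := ha.trans hw.1.le
        have hwu : w ∈ Icc a u0 := ⟨hw.1.le, hw.2.trans hv.2⟩
        have f1 := hyd_F_lip hS hZ hℓ (u := w) (r := x - w) (r' := x' - w) (N := N) hw0 hN
          (fun h => hlip h w ⟨hw.1.le, hw.2.trans hvb.2⟩ _ (by linarith [hw.2]) _ (by linarith [hw.2]))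
        rw [sub_sub_sub_cancel_right] at f1
        have f2 := hM' w hwu
        rw [← mul_sub, norm_mul, Real.norm_eq_abs, Real.norm_eq_abs, abs_of_nonneg (hS.lam0 w hw0),
          mul_comm]
        exact mul_le_mul_of_nonneg_right (by linarith) (hS.lam0 w hw0)
      rw [intervalIntegral.integral_const_mul] at this
      refine this.trans (mul_le_mul_of_nonneg_left ?_ (by positivity))
      have i1 := intervalIntegral.integral_add_adjacent_intervals lI
        (hS.lamI v hv0 b (ha.trans hab))
      have : 0 ≤ ∫ u in v..b, lam u :=
        intervalIntegral.integral_nonneg hvb.2 (fun u hu => hS.lam0 u (hv0.trans hu.1))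
      linarith
    rw [← hxx]
    have hMq : 2 * M * q ≤ M / 2 := by nlinarith
    have b1 := abs_le.1 b1
    have b2 := abs_le.1 b2
    have b3 := abs_le.1 b3
    have b4 := abs_le.1 b4
    rw [e1, e2, abs_le]
    constructor <;> nlinarith

theorem hyd_real_ind (P : ℝ → Prop) {s T : ℝ} (hsT : s ≤ T) (h0 : P s)
    (hc : ∀ a ∈ Ioc s T, (∀ t ∈ Ico s a, P t) → P a)
    (ho : ∀ a ∈ Ico s T, P a → ∃ b > a, P b)
    (hm : ∀ u t, s ≤ u → u ≤ t → P t → P u) : P T := by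
  set S := {t | t ∈ Icc s T ∧ P t} with hS
  have hsS : s ∈ S := ⟨⟨le_rfl, hsT⟩, h0⟩
  have hbd : BddAbove S := ⟨T, fun t ht => ht.1.2⟩
  set a := sSup S with ha
  have hsa : s ≤ a := le_csSup hbd hsS
  have haT : a ≤ T := csSup_le ⟨s, hsS⟩ fun t ht => ht.1.2
  have hPa : P a := by
    rcases eq_or_lt_of_le hsa with h | h
    · rwa [← h]
    · refine hc a ⟨h, haT⟩ fun t ht => ?_
      obtain ⟨x, hx, htx⟩ := exists_lt_of_lt_csSup ⟨s, hsS⟩ ht.2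
      exact hm t x ht.1 htx.le hx.2
  rcases eq_or_lt_of_le haT with h | h
  · rwa [← h]
  · exfalso
    obtain ⟨b, hb, hPb⟩ := ho a ⟨hsa, h⟩ hPa
    have h1 : min b T ∈ S := ⟨⟨le_min (hsa.trans hb.le) hsT, min_le_right _ _⟩,
      hm _ b (le_min (hsa.trans hb.le) hsT) (min_le_left _ _) hPb⟩
    have h2 : min b T ≤ a := le_csSup hbd h1
    have h3 : a < min b T := lt_min hb h
    linarith

theorem hyd_contr_pred (Φ : ℝ → Prop) {C : ℝ} (hC : 0 ≤ C)
    (h : ∀ N ≥ (0:ℝ), Φ N → Φ (C + N / 2)) (hex : ∃ N ≥ (0:ℝ), Φ N) :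
    ∃ N ≤ 2 * C + 1, Φ N := by
  obtain ⟨N, hN, hΦ⟩ := hex
  have key : ∀ n : ℕ, 0 ≤ 2 * C + (N - 2 * C) * (1 / 2) ^ n ∧
      Φ (2 * C + (N - 2 * C) * (1 / 2) ^ n) := by
    intro n
    induction n with
    | zero => simpa using ⟨hN, hΦ⟩
    | succ n ih =>
      have e : 2 * C + (N - 2 * C) * (1 / 2) ^ (n + 1) =
          C + (2 * C + (N - 2 * C) * (1 / 2) ^ n) / 2 := by rw [pow_succ]; ring
      rw [e]
      exact ⟨by linarith [ih.1], h _ ih.1 ih.2⟩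
  obtain ⟨n, hn⟩ := exists_pow_lt_of_lt_one (show (0:ℝ) < 1 / (N + 1) by positivity)
    (show (1 / 2 : ℝ) < 1 by norm_num)
  refine ⟨_, ?_, (key n).2⟩
  rw [lt_div_iff₀ (by positivity)] at hn
  have : (0:ℝ) ≤ (1 / 2) ^ n := by positivity
  nlinarith

theorem hydLip_mono {Z : ℕ → ℝ → ℝ → ℝ} {ℓ : ℕ} {a a' b b' N N' : ℝ} (h : hydLip Z ℓ a b N)
    (ha : a ≤ a') (hb : b' ≤ b) (hN : N ≤ N') : hydLip Z ℓ a' b' N' :=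
  fun u hu r hr r' hr' => (h u ⟨ha.trans hu.1, hu.2.trans hb⟩ r hr r' hr').trans
    (mul_le_mul_of_nonneg_right hN (abs_nonneg _))

theorem hyd_lam_unif {lam G : ℝ → ℝ} {H : ℝ} {Z0 : ℕ → ℝ → ℝ} (hS : HydSys lam G H Z0)
    {a : ℝ} (ha : 0 ≤ a) {ε : ℝ} (hε : 0 < ε) :
    ∃ δ > 0, ∀ s t, 0 ≤ s → s ≤ t → |s - a| < δ → |t - a| < δ →
      (∫ u in s..t, lam u) ≤ ε ∧ t - s ≤ ε := by
  have hc : ContinuousOn (fun t => ∫ u in (0:ℝ)..t, lam u) (Icc 0 (a + 1)) := by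
    have hi := hS.lamI 0 le_rfl (a + 1) (by linarith)
    have := intervalIntegral.continuousOn_primitive_interval' hi left_mem_uIcc
    rwa [uIcc_of_le (by linarith)] at this
  have h1 := hc a ⟨ha, by linarith⟩
  rw [Metric.continuousWithinAt_iff] at h1
  obtain ⟨δ, hδ, h⟩ := h1 (ε / 2) (by linarith)
  refine ⟨min δ (min 1 (ε / 2)), by positivity, ?_⟩
  intro s t hs hst hsa hta
  rw [lt_min_iff, lt_min_iff] at hsa hta
  have s1 := abs_lt.1 hsa.2.1
  have t1 := abs_lt.1 hta.2.1
  have s2 := abs_lt.1 hsa.2.2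
  have t2 := abs_lt.1 hta.2.2
  refine ⟨?_, by linarith⟩
  have k1 := h (x := s) ⟨hs, by linarith⟩ (by rw [Real.dist_eq]; exact hsa.1)
  have k2 := h (x := t) ⟨hs.trans hst, by linarith⟩ (by rw [Real.dist_eq]; exact hta.1)
  rw [Real.dist_eq] at k1 k2
  have i1 := intervalIntegral.integral_add_adjacent_intervals (hS.lamI 0 le_rfl s hs)
    (hS.lamI s hs t (hs.trans hst))
  have k1 := abs_lt.1 k1
  have k2 := abs_lt.1 k2
  linarith

theorem hyd_local {lam G : ℝ → ℝ} {H : ℝ} {Z0 : ℕ → ℝ → ℝ} {Z : ℕ → ℝ → ℝ → ℝ} {d : ℕ → ℝ → ℝ}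
    (hS : HydSys lam G H Z0) (hZ : HydSol lam G Z0 Z d) {a : ℝ} (ha : 0 ≤ a) (k : ℕ) :
    ∃ b > a, ∀ i, 1 ≤ i → i ≤ k → ∃ N ≥ (0:ℝ), hydLip Z i a b N := by
  induction k with
  | zero => exact ⟨a + 1, by linarith, fun i h1 h2 => by omega⟩
  | succ k ih =>
    obtain ⟨b, hb, ih⟩ := ih
    obtain ⟨δ, hδ, hl⟩ := hyd_lam_unif hS ha (show (0:ℝ) < 1 / 4 by norm_num)
    have hex : ∃ t > a, hydGood d (k + 1 + 1) t ∨ ∀ t' ∈ Ioc a t, ¬ hydGood d (k + 1 + 1) t' := by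
      by_cases h : ∃ t > a, hydGood d (k + 1 + 1) t
      · obtain ⟨t, ht, h⟩ := h
        exact ⟨t, ht, Or.inl h⟩
      · push Not at h
        exact ⟨a + 1, by linarith, Or.inr fun t ht => h t ht.1⟩
    obtain ⟨t, hta, ht⟩ := hex
    obtain ⟨c, hc0, hc⟩ := hyd_core hS hZ (ℓ := k + 1) (by omega) ha
    have hN : ∃ N ≥ (0:ℝ), 1 ≤ k → hydLip Z k a b N := by
      by_cases hk : 1 ≤ k
      · obtain ⟨N, hN, h⟩ := ih k hk le_rfl
        exact ⟨N, hN, fun _ => h⟩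
      · exact ⟨0, le_rfl, fun h => absurd h hk⟩
    obtain ⟨N, hN, hNl⟩ := hN
    set b' := min (min b t) (a + δ / 2) with hb'
    have hab' : a < b' := lt_min (lt_min hb hta) (by linarith)
    have hb'b : b' ≤ b := (min_le_left _ _).trans (min_le_left _ _)
    have hb't : b' ≤ t := (min_le_left _ _).trans (min_le_right _ _)
    have hb'δ : b' ≤ a + δ / 2 := min_le_right _ _
    have hI : 0 ≤ ∫ u in a..b', |d (k + 1 + 1) u| :=
      intervalIntegral.integral_nonneg hab'.le (fun _ _ => abs_nonneg _)
    have hL := (hl a b' ha hab'.le (by simpa using hδ) (by rw [abs_lt]; constructor <;> linarith)).1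
    have := hc b' hab'.le (1 / 4) N _ hN hI hL le_rfl
      (fun h => hydLip_mono (hNl (by omega)) le_rfl hb'b le_rfl) (by
        rcases ht with ht | ht
        · exact Or.inl ⟨hydGood_mono (ha.trans hab'.le) hb't ht, le_rfl⟩
        · exact Or.inr fun v hv => ht v ⟨hv.1, hv.2.trans hb't⟩)
    refine ⟨b', hab', fun i h1 h2 => ?_⟩
    rcases Nat.lt_or_ge k i with h | h
    · have : i = k + 1 := by omega
      subst this
      have hH := hS.H0
      exact ⟨_, by positivity, this⟩
    · obtain ⟨N, hN, h⟩ := ih i h1 h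
      exact ⟨N, hN, hydLip_mono h le_rfl hb'b le_rfl⟩

theorem hyd_local_good {lam G : ℝ → ℝ} {H : ℝ} {Z0 : ℕ → ℝ → ℝ} {Z : ℕ → ℝ → ℝ → ℝ}
    {d : ℕ → ℝ → ℝ}
    (hS : HydSys lam G H Z0) (hZ : HydSol lam G Z0 Z d) {a : ℝ} (ha : 0 ≤ a) (k : ℕ) :
    ∃ b > a, ∀ i, 1 ≤ i → i ≤ k → hydGood d i a → hydGood d i b := by
  obtain ⟨b, hb, h⟩ := hyd_local hS hZ ha k
  refine ⟨b, hb, fun i h1 h2 hg => ?_⟩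
  obtain ⟨N, hN, hl⟩ := h i h1 h2
  exact hyd_good_of_bdd hZ h1 ha hb.le hg
    fun u hu => hyd_d_bound hZ h1 ha hl u ⟨hu.1.le, hu.2.le⟩

theorem hyd_closed {lam G : ℝ → ℝ} {H : ℝ} {Z0 : ℕ → ℝ → ℝ} {Z : ℕ → ℝ → ℝ → ℝ} {d : ℕ → ℝ → ℝ}
    (hS : HydSys lam G H Z0) (hZ : HydSol lam G Z0 Z d) {k : ℕ} {s a : ℝ}
    (hs : 0 ≤ s) (hsa : s < a) (hgk : hydGood d k a ∨ ¬ hydGood d k s)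
    (hP : ∀ t ∈ Ico s a, ∀ i, 1 ≤ i → i < k → hydGood d i s → hydGood d i t) :
    ∀ i, 1 ≤ i → i < k → hydGood d i s → hydGood d i a := by
  have hH := hS.H0
  set q : ℝ := 1 / (4 * H + 8) with hq
  have hq0 : 0 < q := by positivity
  have hqH : q * (4 * H + 8) = 1 := by rw [hq]; field_simp
  have hq4 : q ≤ 1 / 4 := by nlinarith
  obtain ⟨δ, hδ, hl⟩ := hyd_lam_unif hS (hs.trans hsa.le) hq0
  set s' := max s (a - δ / 2) with hs'
  have hss' : s ≤ s' := le_max_left _ _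
  have hs'a : s' < a := max_lt hsa (by linarith)
  have hs'δ : a - δ / 2 ≤ s' := le_max_right _ _
  have hs'0 : 0 ≤ s' := hs.trans hss'
  have hlt : ∀ t ∈ Ico s' a, (∫ u in s'..t, lam u) ≤ q ∧ t - s' ≤ q := fun t ht =>
    hl s' t hs'0 ht.1 (by rw [abs_lt]; constructor <;> linarith)
      (by have := ht.1; have := ht.2; rw [abs_lt]; constructor <;> linarith)
  have hcore := fun i : ℕ => fun hi : 1 ≤ i => hyd_core hS hZ hi hs'0
  have hcore' : ∀ i : ℕ, ∃ c ≥ (0:ℝ), 1 ≤ i → ∀ b ≥ s', ∀ q N I : ℝ, 0 ≤ N → 0 ≤ I →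
      (∫ u in s'..b, lam u) ≤ q → q ≤ 1 / 4 →
      (2 ≤ i → hydLip Z (i - 1) s' b N) →
      ((hydGood d (i + 1) b ∧ (∫ u in s'..b, |d (i + 1) u|) ≤ I) ∨
        ∀ t ∈ Ioc s' b, ¬ hydGood d (i + 1) t) →
      hydLip Z i s' b (2 * (c + H * I + (H + 2 * N) * q)) := by
    intro i
    by_cases hi : 1 ≤ i
    · obtain ⟨c, hc, h⟩ := hcore i hi
      exact ⟨c, hc, fun _ => h⟩
    · exact ⟨0, le_rfl, fun h => absurd h hi⟩
  choose c hc0 hc using hcore'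
  set I0 := ∫ u in s'..a, |d k u| with hI0
  have hI00 : 0 ≤ I0 := intervalIntegral.integral_nonneg hs'a.le (fun _ _ => abs_nonneg _)
  set C := 2 * ((∑ i ∈ Finset.range k, c i) + H * I0 + H * q) with hC
  have hcs : 0 ≤ ∑ i ∈ Finset.range k, c i := Finset.sum_nonneg fun i _ => hc0 i
  have hC0 : 0 ≤ C := by positivity
  -- dichotomy at level i + 1
  have hdich : ∀ t ∈ Ico s' a, ∀ i, 1 ≤ i → i < k →
      (hydGood d (i + 1) t ∨ ∀ v ∈ Ioc s' t, ¬ hydGood d (i + 1) v) := by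
    intro t ht i h1 h2
    by_cases hg : hydGood d (i + 1) s
    · left
      rcases Nat.lt_or_ge (i + 1) k with h | h
      · exact hP t ⟨hss'.trans ht.1, ht.2⟩ (i + 1) (by omega) h hg
      · have e : i + 1 = k := by omega
        rw [e] at hg ⊢
        rcases hgk with h | h
        · exact hydGood_mono (hs'0.trans ht.1) ht.2.le h
        · exact absurd hg h
    · right
      intro v hv hg'
      exact hg (hydGood_mono hs (hss'.trans hv.1.le) hg')
  have hbound : ∀ t ∈ Ico s' a, ∃ N ≤ 2 * C + 1, ∀ i, 1 ≤ i → i < k → hydLip Z i s' t N := by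
    intro t ht
    have hst := hlt t ht
    refine hyd_contr_pred (fun N => ∀ i, 1 ≤ i → i < k → hydLip Z i s' t N) hC0 ?_ ?_
    · intro N hN hΦ i h1 h2
      have hstep := hc i h1 t ht.1 q N (q * N + I0) hN (by positivity) hst.1 hq4
        (fun h => hΦ (i - 1) (by omega) (by omega)) (by
          rcases hdich t ht i h1 h2 with h | h
          · refine Or.inl ⟨h, ?_⟩
            rcases Nat.lt_or_ge (i + 1) k with h' | h'
            · have hb := hyd_d_bound hZ (k := i + 1) (by omega) hs'0 (hΦ (i + 1) (by omega) h')
              have hi := (hydGood_sub hs'0 ht.1 h).abs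
              have : ∫ u in s'..t, |d (i + 1) u| ≤ ∫ u in s'..t, N :=
                intervalIntegral.integral_mono_on ht.1 hi (by simp) hb
              rw [intervalIntegral.integral_const, smul_eq_mul] at this
              nlinarith [hst.2]
            · have e : i + 1 = k := by omega
              rw [e] at h ⊢
              have hka : hydGood d k a := by
                rcases hgk with h | h'
                · exact h
                · exact absurd (hydGood_mono hs (hss'.trans ht.1) h) h'
              have i1 := intervalIntegral.integral_add_adjacent_intervals
                (hydGood_sub hs'0 ht.1 h).abs (hydGood_sub (hs'0.trans ht.1) ht.2.le hka).abs
              have : 0 ≤ ∫ u in t..a, |d k u| :=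
                intervalIntegral.integral_nonneg ht.2.le (fun _ _ => abs_nonneg _)
              have : 0 ≤ q * N := by positivity
              linarith
          · exact Or.inr h)
      refine hydLip_mono hstep le_rfl le_rfl ?_
      have hci : c i ≤ ∑ i ∈ Finset.range k, c i :=
        Finset.single_le_sum (fun i _ => hc0 i) (Finset.mem_range.2 h2)
      have e : 2 * (H * (q * N) + 2 * N * q) = N / 2 := by
        have : q * (4 * H + 8) * N = N := by rw [hqH, one_mul]
        linarith
      rw [hC]
      linarith
    · have hex : ∀ i, 1 ≤ i → i < k → ∃ N ≥ (0:ℝ), hydLip Z i s' t N := by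
        intro i h1
        induction i, h1 using Nat.le_induction with
        | base =>
          intro h2
          have hI : 0 ≤ ∫ u in s'..t, |d (1 + 1) u| :=
            intervalIntegral.integral_nonneg ht.1 (fun _ _ => abs_nonneg _)
          have hstep := hc 1 le_rfl t ht.1 q 0 _ le_rfl hI hst.1 hq4
            (fun h => by omega) ((hdich t ht 1 le_rfl h2).imp (fun h => ⟨h, le_rfl⟩) id)
          have := hc0 1
          exact ⟨_, by positivity, hstep⟩
        | succ i h1 ih =>
          intro h2
          obtain ⟨N, hN, hl⟩ := ih (by omega)
          have hI : 0 ≤ ∫ u in s'..t, |d (i + 1 + 1) u| :=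
            intervalIntegral.integral_nonneg ht.1 (fun _ _ => abs_nonneg _)
          have hstep := hc (i + 1) (by omega) t ht.1 q N _ hN hI hst.1 hq4
            (fun h => hl) ((hdich t ht (i + 1) (by omega) h2).imp (fun h => ⟨h, le_rfl⟩) id)
          have := hc0 (i + 1)
          exact ⟨_, by positivity, hstep⟩
      have hex' : ∀ i, ∃ N ≥ (0:ℝ), 1 ≤ i → i < k → hydLip Z i s' t N := by
        intro i
        by_cases h : 1 ≤ i ∧ i < k
        · obtain ⟨N, hN, hl⟩ := hex i h.1 h.2
          exact ⟨N, hN, fun _ _ => hl⟩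
        · exact ⟨0, le_rfl, fun h1 h2 => absurd ⟨h1, h2⟩ h⟩
      choose N hN hNl using hex'
      refine ⟨∑ i ∈ Finset.range k, N i, Finset.sum_nonneg fun i _ => hN i, fun i h1 h2 => ?_⟩
      exact hydLip_mono (hNl i h1 h2) le_rfl le_rfl
        (Finset.single_le_sum (fun i _ => hN i) (Finset.mem_range.2 h2))
  intro i h1 h2 hg
  refine hyd_good_of_bdd hZ h1 hs'0 hs'a.le (hP s' ⟨hss', hs'a⟩ i h1 h2 hg) (N := 2 * C + 1) ?_
  intro u hu
  obtain ⟨N, hN, hl⟩ := hbound u ⟨hu.1.le, hu.2⟩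
  exact (hyd_d_bound hZ h1 hs'0 (hl i h1 h2) u ⟨hu.1.le, le_rfl⟩).trans hN

theorem hyd_A {lam G : ℝ → ℝ} {H : ℝ} {Z0 : ℕ → ℝ → ℝ} {Z : ℕ → ℝ → ℝ → ℝ} {d : ℕ → ℝ → ℝ}
    (hS : HydSys lam G H Z0) (hZ : HydSol lam G Z0 Z d) {k : ℕ} {s T : ℝ}
    (hs : 0 ≤ s) (hsT : s ≤ T) (hgk : hydGood d k T ∨ ¬ hydGood d k s) :
    ∀ i, 1 ≤ i → i < k → hydGood d i s → hydGood d i T := by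
  refine hyd_real_ind (fun t => ∀ i, 1 ≤ i → i < k → hydGood d i s → hydGood d i t) hsT
    (fun i _ _ h => h) ?_ ?_ ?_
  · intro a ha hP
    exact hyd_closed hS hZ hs ha.1
      (hgk.imp (hydGood_mono (hs.trans ha.1.le) ha.2) id) hP
  · intro a ha hP
    obtain ⟨b, hb, h⟩ := hyd_local_good hS hZ (hs.trans ha.1) k
    exact ⟨b, hb, fun i h1 h2 hg => h i h1 h2.le (hP i h1 h2 hg)⟩
  · intro u t hu hut hP i h1 h2 hg
    exact hydGood_mono (hs.trans hu) hut (hP i h1 h2 hg)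

theorem hyd_B {lam G : ℝ → ℝ} {H : ℝ} {Z0 : ℕ → ℝ → ℝ} {Z : ℕ → ℝ → ℝ → ℝ} {d : ℕ → ℝ → ℝ}
    (hS : HydSys lam G H Z0) (hZ : HydSol lam G Z0 Z d) {a : ℝ} (ha : 0 ≤ a) :
    ∃ b > a, ∀ k ≥ 1, hydGood d k a → hydGood d k b := by
  by_contra! hcon
  obtain ⟨k, hk1, hka, hkb⟩ := hcon (a + 1) (by linarith)
  obtain ⟨t, hat, ht⟩ := hyd_local_good hS hZ ha k
  have hkt := ht k hk1 le_rfl hka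
  have htlt : t ≤ a + 1 := by
    by_contra! h
    exact hkb (hydGood_mono (by linarith) h.le hkt)
  obtain ⟨j, hj1, hja, hjt⟩ := hcon t hat
  rcases lt_trichotomy j k with h | h | h
  · exact hjt (hyd_A hS hZ ha hat.le (Or.inl hkt) j hj1 h hja)
  · exact hjt (h ▸ hkt)
  · exact hkb (hyd_A hS hZ (ha.trans hat.le) htlt (Or.inr hjt) k hk1 h hkt)

def hydAg (Z Zt : ℕ → ℝ → ℝ → ℝ) (ℓ : ℕ) (u : ℝ) : Prop := ∀ r ≥ (0:ℝ), Z ℓ u r = Zt ℓ u r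

theorem hyd_d_eq {lam G : ℝ → ℝ} {Z0 : ℕ → ℝ → ℝ} {Z Zt : ℕ → ℝ → ℝ → ℝ} {d dt : ℕ → ℝ → ℝ}
    (hZ : HydSol lam G Z0 Z d) (hZt : HydSol lam G Z0 Zt dt) {ℓ : ℕ} (hℓ : 1 ≤ ℓ) {u : ℝ}
    (hu : 0 ≤ u) (h : hydAg Z Zt ℓ u) : d ℓ u = dt ℓ u := by
  have h1 := (hZ.hd ℓ hℓ u hu).congr (fun r hr => (h r hr).symm) (h 0 le_rfl).symm
  exact UniqueDiffWithinAt.eq_deriv (Ici 0) (uniqueDiffOn_Ici (0:ℝ) 0 self_mem_Ici) h1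
    (hZt.hd ℓ hℓ u hu)

theorem hyd_F_eq {Z Zt : ℕ → ℝ → ℝ → ℝ} (G : ℝ → ℝ) {ℓ : ℕ} (hℓ : 1 ≤ ℓ) {u r : ℝ} (hr : 0 ≤ r)
    (h : ∀ ℓ ≥ 1, hydAg Z Zt ℓ u) : hydF G Z ℓ u r = hydF G Zt ℓ u r := by
  unfold hydF
  split_ifs with h1
  · rw [h 1 le_rfl 0 le_rfl]
  · rw [h ℓ hℓ 0 le_rfl, h ℓ hℓ r hr, h (ℓ - 1) (by omega) 0 le_rfl, h (ℓ - 1) (by omega) r hr]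

theorem hyd_F_diff {lam G : ℝ → ℝ} {H : ℝ} {Z0 : ℕ → ℝ → ℝ} {Z Zt : ℕ → ℝ → ℝ → ℝ}
    {d dt : ℕ → ℝ → ℝ} (hS : HydSys lam G H Z0)
    (hZ : HydSol lam G Z0 Z d) (hZt : HydSol lam G Z0 Zt dt) {ℓ : ℕ} (hℓ : 1 ≤ ℓ) {u r K : ℝ}
    (hu : 0 ≤ u) (hr : 0 ≤ r) (h : ∀ ℓ ≥ 1, ∀ r ≥ (0:ℝ), |Z ℓ u r - Zt ℓ u r| ≤ K) :
    |hydF G Z ℓ u r - hydF G Zt ℓ u r| ≤ 8 * K := by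
  have hK : 0 ≤ K := (abs_nonneg _).trans (h 1 le_rfl 0 le_rfl)
  unfold hydF
  split_ifs with h1
  · have a1 := hZ.bd 1 le_rfl u hu 0 le_rfl
    have a2 := hZt.bd 1 le_rfl u hu 0 le_rfl
    have a3 := h 1 le_rfl 0 le_rfl
    have e : G r * (1 - Z 1 u 0 ^ 2) - G r * (1 - Zt 1 u 0 ^ 2) =
      - (G r * ((Z 1 u 0 + Zt 1 u 0) * (Z 1 u 0 - Zt 1 u 0))) := by ring
    rw [e, abs_neg, abs_mul, abs_mul, abs_of_pos (hS.Gpos r)]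
    have b1 := abs_add_le (Z 1 u 0) (Zt 1 u 0)
    have b2 : |Z 1 u 0 + Zt 1 u 0| * |Z 1 u 0 - Zt 1 u 0| ≤ 2 * K :=
      mul_le_mul (by linarith) a3 (abs_nonneg _) (by norm_num)
    have b3 : G r * (|Z 1 u 0 + Zt 1 u 0| * |Z 1 u 0 - Zt 1 u 0|) ≤ 1 * (2 * K) :=
      mul_le_mul (hS.Gle r) b2 (by positivity) (by norm_num)
    linarith
  · have h2 : 1 ≤ ℓ - 1 := by omega
    have e : (Z (ℓ - 1) u 0 + Z ℓ u 0) * (Z (ℓ - 1) u r - Z ℓ u r) -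
        (Zt (ℓ - 1) u 0 + Zt ℓ u 0) * (Zt (ℓ - 1) u r - Zt ℓ u r) =
        ((Z (ℓ - 1) u 0 - Zt (ℓ - 1) u 0) + (Z ℓ u 0 - Zt ℓ u 0)) * (Z (ℓ - 1) u r - Z ℓ u r) +
        (Zt (ℓ - 1) u 0 + Zt ℓ u 0) *
          ((Z (ℓ - 1) u r - Zt (ℓ - 1) u r) - (Z ℓ u r - Zt ℓ u r)) := by ring
    rw [e]
    refine (abs_add_le _ _).trans ?_
    rw [abs_mul, abs_mul]
    have c1 := h _ h2 0 le_rfl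
    have c2 := h _ hℓ 0 le_rfl
    have c3 := h _ h2 r hr
    have c4 := h _ hℓ r hr
    have c5 := hZ.bd _ h2 u hu r hr
    have c6 := hZ.bd _ hℓ u hu r hr
    have c7 := hZt.bd _ h2 u hu 0 le_rfl
    have c8 := hZt.bd _ hℓ u hu 0 le_rfl
    have f1 := abs_add_le (Z (ℓ - 1) u 0 - Zt (ℓ - 1) u 0) (Z ℓ u 0 - Zt ℓ u 0)
    have f2 := abs_sub (Z (ℓ - 1) u r) (Z ℓ u r)
    have f3 := abs_add_le (Zt (ℓ - 1) u 0) (Zt ℓ u 0)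
    have f4 := abs_sub (Z (ℓ - 1) u r - Zt (ℓ - 1) u r) (Z ℓ u r - Zt ℓ u r)
    have g1 : |(Z (ℓ - 1) u 0 - Zt (ℓ - 1) u 0) + (Z ℓ u 0 - Zt ℓ u 0)| *
        |Z (ℓ - 1) u r - Z ℓ u r| ≤ (2 * K) * 2 :=
      mul_le_mul (by linarith) (by linarith) (abs_nonneg _) (by positivity)
    have g2 : |Zt (ℓ - 1) u 0 + Zt ℓ u 0| *
        |(Z (ℓ - 1) u r - Zt (ℓ - 1) u r) - (Z ℓ u r - Zt ℓ u r)| ≤ 2 * (2 * K) :=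
      mul_le_mul (by linarith) (by linarith) (abs_nonneg _) (by norm_num)
    linarith

theorem hyd_lipall {lam G : ℝ → ℝ} {H : ℝ} {Z0 : ℕ → ℝ → ℝ} {Z : ℕ → ℝ → ℝ → ℝ} {d : ℕ → ℝ → ℝ}
    (hS : HydSys lam G H Z0) (hZ : HydSol lam G Z0 Z d) {a b : ℝ} (ha : 0 ≤ a) (hab : a ≤ b)
    (hq : ∫ u in a..b, lam u ≤ 1 / 4)
    (hd : ∀ k ≥ 1, hydGood d k b ∨ ∀ t ∈ Icc a b, ¬ hydGood d k t) :
    ∀ ℓ, 1 ≤ ℓ → ∃ N ≥ (0:ℝ), hydLip Z ℓ a b N := by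
  have hH := hS.H0
  have step : ∀ ℓ, 1 ≤ ℓ → ∀ N ≥ (0:ℝ), (2 ≤ ℓ → hydLip Z (ℓ - 1) a b N) →
      ∃ N ≥ (0:ℝ), hydLip Z ℓ a b N := by
    intro ℓ hℓ N hN hl
    obtain ⟨c, hc0, hc⟩ := hyd_core hS hZ hℓ ha
    have hI : 0 ≤ ∫ u in a..b, |d (ℓ + 1) u| :=
      intervalIntegral.integral_nonneg hab (fun _ _ => abs_nonneg _)
    exact ⟨_, by positivity, hc b hab (1 / 4) N _ hN hI hq le_rfl hl
      ((hd (ℓ + 1) (by omega)).imp (fun h => ⟨h, le_rfl⟩) (fun h t ht => h t ⟨ht.1.le, ht.2⟩))⟩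
  intro ℓ hℓ
  induction ℓ, hℓ using Nat.le_induction with
  | base => exact step 1 le_rfl 0 le_rfl (fun h => by omega)
  | succ ℓ hℓ ih =>
    obtain ⟨N, hN, hl⟩ := ih
    exact step (ℓ + 1) (by omega) N hN (fun _ => hl)

theorem hyd_rep {lam G : ℝ → ℝ} {H : ℝ} {Z0 : ℕ → ℝ → ℝ} {Z Zt : ℕ → ℝ → ℝ → ℝ}
    {d dt : ℕ → ℝ → ℝ} (hS : HydSys lam G H Z0)
    (hZ : HydSol lam G Z0 Z d) (hZt : HydSol lam G Z0 Zt dt) {a b : ℝ} (ha : 0 ≤ a)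
    (hag : ∀ u ∈ Icc 0 a, ∀ ℓ ≥ 1, hydAg Z Zt ℓ u) {ℓ : ℕ} (hℓ : 1 ≤ ℓ) (e : ℝ → ℝ)
    (he : (hydGood d (ℓ + 1) b ∧ hydGood dt (ℓ + 1) b ∧
        ∀ u, e u = d (ℓ + 1) u - dt (ℓ + 1) u) ∨
      ((∀ t ∈ Icc a b, ¬ hydGood d (ℓ + 1) t ∧ ¬ hydGood dt (ℓ + 1) t) ∧ ∀ u, e u = 0)) :
    ∀ t ∈ Icc a b, ∀ r ≥ (0:ℝ), Z ℓ t r - Zt ℓ t r =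
      (-∫ u in a..t, G (t + r - u) * e u) +
        ∫ u in a..t, lam u * (hydF G Z ℓ u (t + r - u) - hydF G Zt ℓ u (t + r - u)) := by
  intro t ht r hr
  have ht0 : 0 ≤ t := ha.trans ht.1
  have e1 := hZ.eq ℓ hℓ t ht0 r hr
  have e2 := hZt.eq ℓ hℓ t ht0 r hr
  have sI : ∀ (W : ℕ → ℝ → ℝ → ℝ) (dd : ℕ → ℝ → ℝ), HydSol lam G Z0 W dd →
      ∀ s ∈ Icc 0 t, ∀ s' ∈ Icc 0 t,
        IntervalIntegrable (fun u => lam u * hydF G W ℓ u (t + r - u)) volume s s' := by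
    intro W dd hW s hs s' hs'
    refine (hW.FI ℓ hℓ (t + r) (by linarith)).mono_set ?_
    rw [uIcc_of_le (show (0:ℝ) ≤ t + r by linarith)]
    exact uIcc_subset_Icc ⟨hs.1, by linarith [hs.2]⟩ ⟨hs'.1, by linarith [hs'.2]⟩
  have m0 : (0:ℝ) ∈ Icc 0 t := ⟨le_rfl, ht0⟩
  have ma : a ∈ Icc 0 t := ⟨ha, ht.1⟩
  have mt : t ∈ Icc 0 t := ⟨ht0, le_rfl⟩
  have f1 := intervalIntegral.integral_add_adjacent_intervals
    (sI Z d hZ 0 m0 a ma) (sI Z d hZ a ma t mt)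
  have f2 := intervalIntegral.integral_add_adjacent_intervals
    (sI Zt dt hZt 0 m0 a ma) (sI Zt dt hZt a ma t mt)
  have f3 : ∫ u in (0:ℝ)..a, lam u * hydF G Z ℓ u (t + r - u) =
      ∫ u in (0:ℝ)..a, lam u * hydF G Zt ℓ u (t + r - u) := by
    refine intervalIntegral.integral_congr fun u hu => ?_
    rw [uIcc_of_le ha] at hu
    show lam u * _ = lam u * _
    rw [hyd_F_eq G hℓ (by linarith [hu.2, ht.1]) (hag u hu)]
  have f4 := intervalIntegral.integral_sub (sI Z d hZ a ma t mt) (sI Zt dt hZt a ma t mt)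
  simp only [← mul_sub] at f4
  have g : (∫ u in (0:ℝ)..t, G (t + r - u) * d (ℓ + 1) u) -
      (∫ u in (0:ℝ)..t, G (t + r - u) * dt (ℓ + 1) u) = ∫ u in a..t, G (t + r - u) * e u := by
    rcases he with ⟨h1, h2, h3⟩ | ⟨h1, h2⟩
    · have hc : Continuous (fun u => G (t + r - u)) :=
        hS.Gc.comp (continuous_const.sub continuous_id)
      have k1 := hydGood_mono ht0 ht.2 h1
      have k2 := hydGood_mono ht0 ht.2 h2
      have p1 := (hydGood_mono ha ht.1 k1).continuousOn_mul hc.continuousOn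
      have p2 := (hydGood_mono ha ht.1 k2).continuousOn_mul hc.continuousOn
      have q1 := (hydGood_sub ha ht.1 k1).continuousOn_mul hc.continuousOn
      have q2 := (hydGood_sub ha ht.1 k2).continuousOn_mul hc.continuousOn
      have j1 := intervalIntegral.integral_add_adjacent_intervals p1 q1
      have j2 := intervalIntegral.integral_add_adjacent_intervals p2 q2
      have j3 : ∫ u in (0:ℝ)..a, G (t + r - u) * d (ℓ + 1) u =
          ∫ u in (0:ℝ)..a, G (t + r - u) * dt (ℓ + 1) u := by
        refine intervalIntegral.integral_congr fun u hu => ?_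
        rw [uIcc_of_le ha] at hu
        show G _ * _ = G _ * _
        rw [hyd_d_eq hZ hZt (by omega) hu.1 (hag u hu (ℓ + 1) (by omega))]
      have j4 := intervalIntegral.integral_sub q1 q2
      simp only [← mul_sub] at j4
      simp only [h3]
      linarith
    · rw [hyd_bad_int hS (h1 t ht).1, hyd_bad_int hS (h1 t ht).2]
      simp [h2]
  linarith

theorem hyd_U {lam G : ℝ → ℝ} {H : ℝ} {Z0 : ℕ → ℝ → ℝ} {Z Zt : ℕ → ℝ → ℝ → ℝ}
    {d dt : ℕ → ℝ → ℝ} (hS : HydSys lam G H Z0)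
    (hZ : HydSol lam G Z0 Z d) (hZt : HydSol lam G Z0 Zt dt) {a : ℝ} (ha : 0 ≤ a)
    (hag : ∀ u ∈ Icc 0 a, ∀ ℓ ≥ 1, hydAg Z Zt ℓ u) :
    ∃ b > a, ∀ u ∈ Icc 0 b, ∀ ℓ ≥ 1, hydAg Z Zt ℓ u := by
  classical
  have hH := hS.H0
  set q : ℝ := 1 / (4 * H + 48) with hq
  have hq0 : 0 < q := by positivity
  have hqH : q * (4 * H + 48) = 1 := by rw [hq]; field_simp
  have hq4 : q ≤ 1 / 48 := by nlinarith
  have hHq : H * q ≤ 1 / 4 := by nlinarith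
  obtain ⟨δ, hδ, hl⟩ := hyd_lam_unif hS ha hq0
  obtain ⟨b1, hb1, hB1⟩ := hyd_B hS hZ ha
  obtain ⟨b2, hb2, hB2⟩ := hyd_B hS hZt ha
  obtain ⟨b, hab, hbb1, hbb2, hbδ⟩ : ∃ b > a, b ≤ b1 ∧ b ≤ b2 ∧ b ≤ a + δ / 2 :=
    ⟨min (min b1 b2) (a + δ / 2), lt_min (lt_min hb1 hb2) (by linarith),
      (min_le_left _ _).trans (min_le_left _ _), (min_le_left _ _).trans (min_le_right _ _),
      min_le_right _ _⟩
  have hb0 : 0 ≤ b := ha.trans hab.le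
  obtain ⟨hlq, hbq⟩ := hl a b ha hab.le (by simpa using hδ)
    (by rw [abs_lt]; constructor <;> linarith)
  have hlt : ∀ t ∈ Icc a b, ∫ u in a..t, lam u ≤ q := by
    intro t ht
    have i1 := intervalIntegral.integral_add_adjacent_intervals
      (hS.lamI a ha t (ha.trans ht.1)) (hS.lamI t (ha.trans ht.1) b hb0)
    have : 0 ≤ ∫ u in t..b, lam u :=
      intervalIntegral.integral_nonneg ht.2 (fun u hu => hS.lam0 u ((ha.trans ht.1).trans hu.1))
    linarith
  have hgiff : ∀ k ≥ 1, hydGood d k a ↔ hydGood dt k a := by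
    intro k hk
    have hE : EqOn (d k) (dt k) (uIoc 0 a) := by
      intro u hu
      rw [uIoc_of_le ha] at hu
      exact hyd_d_eq hZ hZt hk hu.1.le (hag u ⟨hu.1.le, hu.2⟩ k hk)
    exact ⟨fun h => IntervalIntegrable.congr hE h, fun h => IntervalIntegrable.congr hE.symm h⟩
  have hdich : ∀ k ≥ 1, (hydGood d k b ∧ hydGood dt k b) ∨
      ∀ t ∈ Icc a b, ¬ hydGood d k t ∧ ¬ hydGood dt k t := by
    intro k hk
    by_cases h : hydGood d k a
    · exact Or.inl ⟨hydGood_mono hb0 hbb1 (hB1 k hk h),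
        hydGood_mono hb0 hbb2 (hB2 k hk ((hgiff k hk).1 h))⟩
    · exact Or.inr fun t ht => ⟨fun h' => h (hydGood_mono ha ht.1 h'),
        fun h' => h ((hgiff k hk).2 (hydGood_mono ha ht.1 h'))⟩
  have hL1 := hyd_lipall hS hZ ha hab.le (by linarith)
    (fun k hk => (hdich k hk).imp And.left fun h t ht => (h t ht).1)
  have hL2 := hyd_lipall hS hZt ha hab.le (by linarith)
    (fun k hk => (hdich k hk).imp And.right fun h t ht => (h t ht).2)
  obtain ⟨e, he⟩ : ∃ e : ℕ → ℝ → ℝ, ∀ k, e k =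
      if hydGood d k b then (fun u => d k u - dt k u) else (fun _ => 0) := ⟨_, fun k => rfl⟩
  have heI : ∀ k ≥ 1, IntervalIntegrable (e k) volume a b := by
    intro k hk
    rw [he]
    rcases hdich k hk with h | h
    · rw [if_pos h.1]
      exact (hydGood_sub ha hab.le h.1).sub (hydGood_sub ha hab.le h.2)
    · rw [if_neg (h b ⟨hab.le, le_rfl⟩).1]
      exact intervalIntegrable_const
  have heIt : ∀ k ≥ 1, ∀ t ∈ Icc a b, IntervalIntegrable (e k) volume a t := by
    intro k hk t ht
    refine (heI k hk).mono_set ?_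
    rw [uIcc_of_le hab.le, uIcc_of_le ht.1]
    exact Icc_subset_Icc_right ht.2
  have rep := fun (ℓ : ℕ) (hℓ : 1 ≤ ℓ) => hyd_rep (b := b) hS hZ hZt ha hag hℓ (e (ℓ + 1)) (by
    rcases hdich (ℓ + 1) (by omega) with h | h
    · exact Or.inl ⟨h.1, h.2, fun u => by rw [he, if_pos h.1]⟩
    · exact Or.inr ⟨h, fun u => by rw [he, if_neg (h b ⟨hab.le, le_rfl⟩).1]⟩)
  have hΔ2 : ∀ ℓ ≥ 1, ∀ t ≥ (0:ℝ), ∀ r ≥ (0:ℝ), |Z ℓ t r - Zt ℓ t r| ≤ 2 := by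
    intro ℓ hℓ t ht r hr
    have h1 := hZ.bd ℓ hℓ t ht r hr
    have h2 := hZt.bd ℓ hℓ t ht r hr
    have := abs_sub (Z ℓ t r) (Zt ℓ t r)
    linarith
  -- bound of the source term
  have hFint : ∀ ℓ ≥ 1, ∀ K, (∀ ℓ ≥ 1, ∀ t ∈ Icc a b, ∀ r ≥ (0:ℝ), |Z ℓ t r - Zt ℓ t r| ≤ K) →
      ∀ t ∈ Icc a b, ∀ r ≥ (0:ℝ),
      |∫ u in a..t, lam u * (hydF G Z ℓ u (t + r - u) - hydF G Zt ℓ u (t + r - u))| ≤ 8 * K * q := by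
    intro ℓ hℓ K hK t ht r hr
    have hK0 : 0 ≤ K := (abs_nonneg _).trans (hK 1 le_rfl a ⟨le_rfl, hab.le⟩ 0 le_rfl)
    have : ‖∫ u in a..t, lam u * (hydF G Z ℓ u (t + r - u) - hydF G Zt ℓ u (t + r - u))‖ ≤
        ∫ u in a..t, 8 * K * lam u := by
      refine intervalIntegral.norm_integral_le_of_norm_le ht.1 ?_
        ((hS.lamI a ha t (ha.trans ht.1)).const_mul _)
      refine Filter.Eventually.of_forall fun u hu => ?_
      have hu0 : 0 ≤ u := ha.trans hu.1.le
      have f1 := hyd_F_diff hS hZ hZt hℓ (u := u) (r := t + r - u) (K := K) hu0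
        (by linarith [hu.2]) (fun ℓ hℓ r hr => hK ℓ hℓ u ⟨hu.1.le, hu.2.trans ht.2⟩ r hr)
      rw [norm_mul, Real.norm_eq_abs, Real.norm_eq_abs, abs_of_nonneg (hS.lam0 u hu0), mul_comm]
      exact mul_le_mul_of_nonneg_right f1 (hS.lam0 u hu0)
    rw [intervalIntegral.integral_const_mul] at this
    exact this.trans (mul_le_mul_of_nonneg_left (hlt t ht) (by positivity))
  have hFint2 : ∀ ℓ ≥ 1, ∀ K, (∀ ℓ ≥ 1, ∀ t ∈ Icc a b, ∀ r ≥ (0:ℝ), |Z ℓ t r - Zt ℓ t r| ≤ K) →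
      ∀ t ∈ Icc a b,
      |∫ u in a..t, lam u * ((hydF G Z ℓ u (t - u) - hydF G Zt ℓ u (t - u)) -
        (hydF G Z ℓ u 0 - hydF G Zt ℓ u 0))| ≤ 16 * K * q := by
    intro ℓ hℓ K hK t ht
    have hK0 : 0 ≤ K := (abs_nonneg _).trans (hK 1 le_rfl a ⟨le_rfl, hab.le⟩ 0 le_rfl)
    have : ‖∫ u in a..t, lam u * ((hydF G Z ℓ u (t - u) - hydF G Zt ℓ u (t - u)) -
        (hydF G Z ℓ u 0 - hydF G Zt ℓ u 0))‖ ≤ ∫ u in a..t, 16 * K * lam u := by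
      refine intervalIntegral.norm_integral_le_of_norm_le ht.1 ?_
        ((hS.lamI a ha t (ha.trans ht.1)).const_mul _)
      refine Filter.Eventually.of_forall fun u hu => ?_
      have hu0 : 0 ≤ u := ha.trans hu.1.le
      have hKu : ∀ ℓ ≥ 1, ∀ r ≥ (0:ℝ), |Z ℓ u r - Zt ℓ u r| ≤ K :=
        fun ℓ hℓ r hr => hK ℓ hℓ u ⟨hu.1.le, hu.2.trans ht.2⟩ r hr
      have f1 := hyd_F_diff hS hZ hZt hℓ (u := u) (r := t - u) (K := K) hu0
        (by linarith [hu.2]) hKu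
      have f2 := hyd_F_diff hS hZ hZt hℓ (u := u) (r := 0) (K := K) hu0 le_rfl hKu
      have f3 := abs_sub (hydF G Z ℓ u (t - u) - hydF G Zt ℓ u (t - u))
        (hydF G Z ℓ u 0 - hydF G Zt ℓ u 0)
      rw [norm_mul, Real.norm_eq_abs, Real.norm_eq_abs, abs_of_nonneg (hS.lam0 u hu0), mul_comm]
      exact mul_le_mul_of_nonneg_right (by linarith) (hS.lam0 u hu0)
    rw [intervalIntegral.integral_const_mul] at this
    exact this.trans (mul_le_mul_of_nonneg_left (hlt t ht) (by positivity))
  -- uniform a priori bound on the primitives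
  have hE6 : ∀ ℓ ≥ 1, ∀ t ∈ Icc a b, |∫ u in a..t, e (ℓ + 1) u| ≤ 6 := by
    intro ℓ hℓ
    have := hyd_contr (ι := Icc a b) (fun t => |∫ u in a..(t:ℝ), e (ℓ + 1) u|) 3 ?_ ?_
    · intro t ht
      have := this ⟨t, ht⟩
      simp only at this
      linarith
    · refine ⟨∫ u in a..b, |e (ℓ + 1) u|, fun t => ?_⟩
      have h1 := intervalIntegral.abs_integral_le_integral_abs (μ := volume) (f := e (ℓ + 1)) t.2.1
      have i1 := intervalIntegral.integral_add_adjacent_intervals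
        (heIt (ℓ + 1) (by omega) t t.2).abs ((heIt (ℓ + 1) (by omega) t t.2).symm.trans
          (heI (ℓ + 1) (by omega))).abs
      have : 0 ≤ ∫ u in (t:ℝ)..b, |e (ℓ + 1) u| :=
        intervalIntegral.integral_nonneg t.2.2 (fun _ _ => abs_nonneg _)
      linarith
    · rintro N hN ⟨t, ht⟩
      show |∫ u in a..t, e (ℓ + 1) u| ≤ _
      have hN0 : 0 ≤ N := (abs_nonneg _).trans (hN ⟨t, ht⟩)
      have r1 := rep ℓ hℓ t ht 0 le_rfl
      have r2 := abs_le.1 (hFint ℓ hℓ 2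
        (fun ℓ hℓ t ht r hr => hΔ2 ℓ hℓ t (ha.trans ht.1) r hr) t ht 0 le_rfl)
      have r3 := abs_le.1 (hyd_byparts G H hH hS.Glip (e (ℓ + 1)) ht.1 (heIt (ℓ + 1) (by omega) t ht) N
        (fun s hs => hN ⟨s, hs.1, hs.2.trans ht.2⟩) t)
      have r4 := abs_le.1 (hΔ2 ℓ hℓ t (ha.trans ht.1) 0 le_rfl)
      simp only [add_zero, sub_self, hS.G0, one_mul] at r1 r2 r3
      have r5 : H * N * (t - a) ≤ N / 2 := by
        have : H * (t - a) ≤ H * q := mul_le_mul_of_nonneg_left (by linarith [ht.2]) hH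
        nlinarith
      rw [abs_le]
      constructor <;> linarith
  have hmain := hyd_contr (ι := {ℓ : ℕ // 1 ≤ ℓ} × Icc a b × Ici (0:ℝ))
    (fun p => max |∫ u in a..(p.2.1:ℝ), e (p.1 + 1) u| |Z p.1 p.2.1 p.2.2 - Zt p.1 p.2.1 p.2.2|)
    0 ?_ ?_
  · refine ⟨b, hab, fun u hu ℓ hℓ r hr => ?_⟩
    rcases le_total u a with h | h
    · exact hag u ⟨hu.1, h⟩ ℓ hℓ r hr
    · have h1 := hmain ⟨⟨ℓ, hℓ⟩, ⟨u, h, hu.2⟩, ⟨r, hr⟩⟩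
      simp only [mul_zero] at h1
      have h2 := (max_le_iff.1 h1).2
      exact sub_eq_zero.1 (abs_nonpos_iff.1 h2)
  · refine ⟨6, fun p => max_le (hE6 p.1 p.1.2 p.2.1 p.2.1.2) ?_⟩
    exact (hΔ2 p.1 p.1.2 p.2.1 (ha.trans p.2.1.2.1) p.2.2 p.2.2.2).trans (by norm_num)
  · intro K hK
    have hKE : ∀ ℓ ≥ 1, ∀ t ∈ Icc a b, |∫ u in a..t, e (ℓ + 1) u| ≤ K := fun ℓ hℓ t ht =>
      (max_le_iff.1 (hK ⟨⟨ℓ, hℓ⟩, ⟨t, ht⟩, ⟨0, self_mem_Ici⟩⟩)).1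
    have hKΔ : ∀ ℓ ≥ 1, ∀ t ∈ Icc a b, ∀ r ≥ (0:ℝ), |Z ℓ t r - Zt ℓ t r| ≤ K :=
      fun ℓ hℓ t ht r hr => (max_le_iff.1 (hK ⟨⟨ℓ, hℓ⟩, ⟨t, ht⟩, ⟨r, hr⟩⟩)).2
    have hK0 : 0 ≤ K := (abs_nonneg _).trans (hKE 1 le_rfl a ⟨le_rfl, hab.le⟩)
    have hqt : ∀ t ∈ Icc a b, H * K * (t - a) ≤ H * K * q := fun t ht =>
      mul_le_mul_of_nonneg_left (by linarith [ht.2]) (by positivity)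
    have hEk : ∀ k ≥ 2, ∀ t ∈ Icc a b, |∫ u in a..t, e k u| ≤ H * K * q + 16 * K * q := by
      intro k hk t ht
      rcases hdich k (by omega) with h | h
      · obtain ⟨N1, hN1, hl1⟩ := hL1 k (by omega)
        obtain ⟨N2, hN2, hl2⟩ := hL2 k (by omega)
        obtain ⟨M1, hM1, hm1⟩ := hL1 (k - 1) (by omega)
        obtain ⟨M2, hM2, hm2⟩ := hL2 (k - 1) (by omega)
        have sI : ∀ (W : ℕ → ℝ → ℝ → ℝ) (dd : ℕ → ℝ → ℝ), HydSol lam G Z0 W dd →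
            ∀ t ∈ Icc a b, ∀ x ≥ t,
              IntervalIntegrable (fun u => lam u * hydF G W k u (x - u)) volume a t := by
          intro W dd hW t ht x hx
          have ht0 := ha.trans ht.1
          refine (hW.FI k (by omega) x (ht0.trans hx)).mono_set ?_
          rw [uIcc_of_le (ht0.trans hx)]
          exact uIcc_subset_Icc ⟨ha, ht.1.trans hx⟩ ⟨ht0, hx⟩
        have sI0 : ∀ (W : ℕ → ℝ → ℝ → ℝ) (dd : ℕ → ℝ → ℝ), HydSol lam G Z0 W dd →
              IntervalIntegrable (fun u => lam u * hydF G W k u 0) volume a b := by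
          intro W dd hW
          refine (hW.FI0 k (by omega) b hb0).mono_set ?_
          rw [uIcc_of_le hb0]
          exact uIcc_subset_Icc ⟨ha, hab.le⟩ ⟨hb0, le_rfl⟩
        have tr := hyd_transport G H hH hS.Glip hS.G0 (a := a) (b := b) lam (e (k + 1)) (e k)
          (fun t r => Z k t r - Zt k t r) (fun u r => hydF G Z k u r - hydF G Zt k u r)
          (N1 + N2) ((H + 2 * M1 + 2 * N1) + (H + 2 * M2 + 2 * N2))
          (hS.lamI a ha b hb0) (fun u hu => hS.lam0 u (ha.trans hu.1)) (heI (k + 1) (by omega))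
          (heI k (by omega)) ?_ ?_ (rep k (by omega)) ?_ ?_ ?_ t ht
        · have bp := abs_le.1 (hyd_byparts (fun x => 1 - G x) H hH
            (fun x y => by
              have := hS.Glip y x
              rw [show 1 - G x - (1 - G y) = G y - G x by ring, abs_sub_comm x y]
              exact this) (e (k + 1)) ht.1
            (heIt (k + 1) (by omega) t ht) K
            (fun s hs => hKE k (by omega) s ⟨hs.1, hs.2.trans ht.2⟩) t)
          simp only [sub_self, hS.G0, zero_mul, sub_zero] at bp
          have f2 := abs_le.1 (hFint2 k (by omega) K hKΔ t ht)
          have f3 := hqt t ht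
          rw [tr, abs_le]
          constructor <;> linarith
        · intro t ht x hx
          refine ((sI Z d hZ t ht x hx).sub (sI Zt dt hZt t ht x hx)).congr fun u _ => ?_
          simp only [mul_sub]
        · refine ((sI0 Z d hZ).sub (sI0 Zt dt hZt)).congr fun u _ => ?_
          simp only [mul_sub]
        · intro t ht r hr
          have g1 := abs_le.1 (hl1 t ht r hr 0 le_rfl)
          have g2 := abs_le.1 (hl2 t ht r hr 0 le_rfl)
          rw [sub_zero, abs_of_nonneg hr] at g1 g2
          rw [abs_le]
          constructor <;> linarith
        · intro t ht r hr
          have ht0 := ha.trans ht.1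
          have g1 := hl1 t ht r hr 0 le_rfl
          have g2 := hl2 t ht r hr 0 le_rfl
          have g3 := abs_le.1 (hyd_F_lip hS hZ (ℓ := k) (by omega) ht0 hM1
            (fun _ => hm1 t ht r hr 0 le_rfl))
          have g4 := abs_le.1 (hyd_F_lip hS hZt (ℓ := k) (by omega) ht0 hM2
            (fun _ => hm2 t ht r hr 0 le_rfl))
          rw [sub_zero, abs_of_nonneg hr] at g1 g2 g3 g4
          rw [abs_le]
          constructor <;> linarith
        · intro t ht
          have ht0 := ha.trans ht.1
          have := (hZ.hd k (by omega) t ht0).sub (hZt.hd k (by omega) t ht0)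
          rw [he, if_pos h.1]
          exact this
      · rw [he, if_neg (h b ⟨hab.le, le_rfl⟩).1]
        simp only [intervalIntegral.integral_zero, abs_zero]
        positivity
    rintro ⟨⟨ℓ, hℓ⟩, ⟨t, ht⟩, ⟨r, hr⟩⟩
    have hr : 0 ≤ r := hr
    have hE := hEk (ℓ + 1) (by omega) t ht
    have hqK : q * (4 * H + 48) * K = K := by rw [hqH, one_mul]
    have hHK : 0 ≤ H * K * q := by positivity
    have hKq : 0 ≤ K * q := by positivity
    refine max_le (hE.trans (by linarith)) ?_
    show |Z ℓ t r - Zt ℓ t r| ≤ _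
    have r1 := rep ℓ hℓ t ht r hr
    have r2 := abs_le.1 (hFint ℓ hℓ K hKΔ t ht r hr)
    have r3 := abs_le.1 (hyd_byparts G H hH hS.Glip (e (ℓ + 1)) ht.1 (heIt (ℓ + 1) (by omega) t ht) K
      (fun s hs => hKE ℓ hℓ s ⟨hs.1, hs.2.trans ht.2⟩) (t + r))
    have r4 : |G (t + r - t) * ∫ u in a..t, e (ℓ + 1) u| ≤ 1 * (H * K * q + 16 * K * q) := by
      rw [abs_mul, abs_of_pos (hS.Gpos _)]
      exact mul_le_mul (hS.Gle _) hE (abs_nonneg _) (by norm_num)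
    have r4 := abs_le.1 r4
    have r5 := hqt t ht
    rw [r1, abs_le]
    constructor <;> linarith

theorem hyd_closed_ag {lam G : ℝ → ℝ} {Z0 : ℕ → ℝ → ℝ} {Z Zt : ℕ → ℝ → ℝ → ℝ}
    {d dt : ℕ → ℝ → ℝ}
    (hZ : HydSol lam G Z0 Z d) (hZt : HydSol lam G Z0 Zt dt) {a : ℝ} (ha : 0 ≤ a)
    (hag : ∀ u ∈ Ico 0 a, ∀ ℓ ≥ 1, hydAg Z Zt ℓ u) :
    ∀ ℓ ≥ 1, hydAg Z Zt ℓ a := by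
  intro ℓ hℓ r hr
  rw [hZ.eq ℓ hℓ a ha r hr, hZt.eq ℓ hℓ a ha r hr]
  have hne : ∀ᵐ u : ℝ, u ≠ a := by
    rw [ae_iff]; simp
  congr 1
  · congr 1
    refine intervalIntegral.integral_congr_ae ?_
    filter_upwards [hne] with u hua hu
    rw [uIoc_of_le ha] at hu
    have hu' : u ∈ Ico 0 a := ⟨hu.1.le, lt_of_le_of_ne hu.2 hua⟩
    rw [hyd_d_eq hZ hZt (by omega) hu'.1 (hag u hu' (ℓ + 1) (by omega))]
  · refine intervalIntegral.integral_congr_ae ?_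
    filter_upwards [hne] with u hua hu
    rw [uIoc_of_le ha] at hu
    have hu' : u ∈ Ico 0 a := ⟨hu.1.le, lt_of_le_of_ne hu.2 hua⟩
    rw [hyd_F_eq G hℓ (by linarith [hu.2]) (hag u hu')]

theorem hyd_final {lam G : ℝ → ℝ} {H : ℝ} {Z0 : ℕ → ℝ → ℝ} {Z Zt : ℕ → ℝ → ℝ → ℝ}
    {d dt : ℕ → ℝ → ℝ} (hS : HydSys lam G H Z0)
    (hZ : HydSol lam G Z0 Z d) (hZt : HydSol lam G Z0 Zt dt) {T : ℝ} (hT : 0 ≤ T) :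
    ∀ ℓ ≥ 1, hydAg Z Zt ℓ T := by
  have := hyd_real_ind (fun t => ∀ u ∈ Icc 0 t, ∀ ℓ ≥ 1, hydAg Z Zt ℓ u) hT ?_ ?_ ?_ ?_
  · exact this T ⟨hT, le_rfl⟩
  · intro u hu
    have : u = 0 := le_antisymm hu.2 hu.1
    subst this
    exact hyd_closed_ag hZ hZt le_rfl (fun u hu => absurd hu.2 (not_lt.2 hu.1))
  · intro a ha h u hu
    have h' : ∀ u ∈ Ico 0 a, ∀ ℓ ≥ 1, hydAg Z Zt ℓ u := fun u hu => h u hu u ⟨hu.1, le_rfl⟩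
    rcases eq_or_lt_of_le hu.2 with e | e
    · subst e
      exact hyd_closed_ag hZ hZt hu.1 h'
    · exact h' u ⟨hu.1, e⟩
  · intro a ha h
    exact hyd_U hS hZ hZt ha.1 h
  · intro u t hu hut h v hv
    exact h v ⟨hv.1, hv.2.trans hut⟩

/-- Uniqueness of solutions to the hydrodynamic PDE (Theorem 4.1). -/
theorem hydroPDE_uniqueness
    (lam g Gbar : ℝ → ℝ) (H : ℝ)
    (hlam_nonneg : ∀ t ≥ (0:ℝ), 0 ≤ lam t)
    (hlam_loc : ∀ T : ℝ, IntegrableOn lam (Icc 0 T))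
    (hg_nonneg : ∀ x ≥ (0:ℝ), 0 ≤ g x)
    (hg_loc : ∀ T : ℝ, IntegrableOn g (Icc 0 T))
    (hg_int : IntegrableOn g (Ici 0))
    (hg_prob : ∫ x in Ici (0:ℝ), g x = 1)
    (hg_mean : ∫ x in Ici (0:ℝ), x * g x = 1)
    (hGbar : ∀ x ≥ (0:ℝ), Gbar x = ∫ y in Ioi x, g y)
    (hhaz : ∀ x ≥ (0:ℝ), g x ≤ H * Gbar x)
    (Z0 : ℕ → ℝ → ℝ)
    (hZ0 : ∀ ℓ ≥ 1, ContDiffOn ℝ 1 (Z0 ℓ) (Ici 0) ∧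
      (∃ M : ℝ, ∀ r ≥ (0:ℝ), |derivWithin (Z0 ℓ) (Ici 0) r| ≤ M) ∧
      ∀ r ≥ (0:ℝ), |Z0 ℓ r| ≤ 1)
    (Z Zt : ℕ → ℝ → ℝ → ℝ)
    (hZ : IsHydroSol lam Gbar Z0 Z) (hZt : IsHydroSol lam Gbar Z0 Zt) :
    ∀ ℓ ≥ 1, ∀ t ≥ (0:ℝ), ∀ r ≥ (0:ℝ), Z ℓ t r = Zt ℓ t r := by
  obtain ⟨G, hGG, hH, hG0, hGlip, hGpos, hGle⟩ :=
    hyd_gbar g Gbar H hg_nonneg hg_int hg_prob hGbar hhaz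
  have hS : HydSys lam G H Z0 :=
    { lam0 := hlam_nonneg
      lamI := by
        intro s hs t ht
        rw [intervalIntegrable_iff]
        refine (hlam_loc (max s t)).mono_set fun u hu => ?_
        rw [uIoc, mem_Ioc] at hu
        exact ⟨(le_min hs ht).trans hu.1.le, hu.2⟩
      H0 := hH
      G0 := hG0
      Glip := hGlip
      Gpos := hGpos
      Gle := hGle
      Z0lip := fun ℓ hℓ => hyd_c1_lip (Z0 ℓ) (hZ0 ℓ hℓ).1 (hZ0 ℓ hℓ).2.1 }
  have h1 := hyd_conv lam Gbar G Z0 H hS hGG Z hZ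
  have h2 := hyd_conv lam Gbar G Z0 H hS hGG Zt hZt
  intro ℓ hℓ t ht r hr
  exact hyd_final hS h1 h2 ht ℓ hℓ r hr
end

section
/- Solution of the renewal equation via the renewal density: let g be a nonnegative locally integrable function on [0,∞), and let u be a nonnegative measurable function on [0,∞), bounded on every compact interval, satisfying u(t) = ∫₀ᵗ g(t−s) u(s) ds + g(t) for almost every t ≥ 0. Let F be a measurable function on [0,∞) that is bounded on every compact interval, and define D(t) = F(t) + ∫₀ᵗ u(t−s) F(s) ds. Then D satisfies the renewal equation D(t) = ∫₀ᵗ g(t−s) D(s) ds + F(t) for almost every t ≥ 0. -/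
open MeasureTheory Set

/-- Solution of the renewal equation via the renewal density: if `u = g ∗ u + g` a.e. on
`[0,∞)` and `D = F + u ∗ F`, then `D = g ∗ D + F` a.e. on `[0,∞)`. -/
theorem renewal_density_solves_renewal_equation
    (g u F D : ℝ → ℝ)
    (hg_nonneg : ∀ x ≥ (0:ℝ), 0 ≤ g x)
    (hg_loc : ∀ T : ℝ, IntegrableOn g (Icc 0 T))
    (hu_meas : Measurable u)
    (hu_nonneg : ∀ x ≥ (0:ℝ), 0 ≤ u x)
    (hu_bdd : ∀ T : ℝ, ∃ M : ℝ, ∀ x ∈ Icc (0:ℝ) T, u x ≤ M)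
    (hu_eq : ∀ᵐ t ∂(volume : Measure ℝ),
      0 ≤ t → u t = (∫ s in (0:ℝ)..t, g (t - s) * u s) + g t)
    (hF_meas : Measurable F)
    (hF_bdd : ∀ T : ℝ, ∃ M : ℝ, ∀ x ∈ Icc (0:ℝ) T, |F x| ≤ M)
    (hD : ∀ t : ℝ, D t = F t + ∫ s in (0:ℝ)..t, u (t - s) * F s) :
    ∀ᵐ t ∂(volume : Measure ℝ),
      0 ≤ t → D t = (∫ s in (0:ℝ)..t, g (t - s) * D s) + F t := by
  filter_upwards with t ht
  have ag : IntervalIntegrable (fun q => g (t - q)) volume 0 t := by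
    have h1 : IntervalIntegrable g volume 0 t := by
      rw [intervalIntegrable_iff_integrableOn_Icc_of_le ht]
      exact hg_loc t
    have h2 := (h1.comp_sub_left t).symm
    simpa using h2
  have ag' : Integrable (fun q => g (t - q)) (volume.restrict (Ioc 0 t)) := by
    rwa [intervalIntegrable_iff_integrableOn_Ioc_of_le ht] at ag
  obtain ⟨M, hM⟩ := hu_bdd t
  obtain ⟨N, hN⟩ := hF_bdd t
  have hM0 : 0 ≤ M := (hu_nonneg 0 le_rfl).trans (hM 0 ⟨le_rfl, ht⟩)
  have hN0 : 0 ≤ N := (abs_nonneg _).trans (hN 0 ⟨le_rfl, ht⟩)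
  set μ : Measure ℝ := volume.restrict (Ioc 0 t) with hμ
  set k : ℝ → ℝ → ℝ := fun s q => if s < q then u (q - s) * F s else 0 with hk
  have kmeas : Measurable (fun p : ℝ × ℝ => k p.1 p.2) := by
    refine Measurable.ite (measurableSet_lt measurable_fst measurable_snd) ?_ measurable_const
    exact (hu_meas.comp (measurable_snd.sub measurable_fst)).mul (hF_meas.comp measurable_fst)
  have kbdd : ∀ s ∈ Ioc 0 t, ∀ q ∈ Ioc 0 t, ‖k s q‖ ≤ M * N := by
    intro s hs q hq
    simp only [hk]
    split_ifs with h
    · rw [norm_mul, Real.norm_eq_abs, Real.norm_eq_abs,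
        abs_of_nonneg (hu_nonneg _ (by linarith : q - s ≥ 0))]
      exact mul_le_mul (hM _ ⟨by linarith, by linarith [hs.1, hq.2]⟩) (hN s ⟨hs.1.le, hs.2⟩)
        (abs_nonneg _) hM0
    · simpa using mul_nonneg hM0 hN0
  have H : Integrable (fun p : ℝ × ℝ => g (t - p.2) * k p.1 p.2) (μ.prod μ) := by
    have h1 : Integrable (fun p : ℝ × ℝ => g (t - p.2)) (μ.prod μ) := ag'.comp_snd μ
    refine h1.mul_bdd (c := M * N) kmeas.aestronglyMeasurable ?_
    rw [hμ, Measure.prod_restrict]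
    filter_upwards [ae_restrict_mem (measurableSet_Ioc.prod measurableSet_Ioc)] with p hp
    exact kbdd _ hp.1 _ hp.2
  have swap : ∫ s, ∫ q, g (t - q) * k s q ∂μ ∂μ = ∫ q, ∫ s, g (t - q) * k s q ∂μ ∂μ :=
    integral_integral_swap H
  have inner1 : ∀ s ∈ Ioc 0 t, ∫ q, g (t - q) * k s q ∂μ
      = (∫ r in (0:ℝ)..(t - s), g (t - s - r) * u r) * F s := by
    intro s hs
    have e1 : (fun q => g (t - q) * k s q)
        = (Ioi s).indicator (fun q => g (t - q) * u (q - s) * F s) := by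
      ext q
      by_cases h : s < q <;> simp [hk, h, indicator, mul_assoc]
    have e3 : Ioc 0 t ∩ Ioi s = Ioc s t := by
      ext q
      simp only [mem_inter_iff, mem_Ioc, mem_Ioi]
      exact ⟨fun h => ⟨h.2, h.1.2⟩, fun h => ⟨⟨hs.1.trans h.1, h.2⟩, h.1⟩⟩
    rw [e1, hμ, setIntegral_indicator measurableSet_Ioi, e3, integral_mul_const,
      ← intervalIntegral.integral_of_le hs.2]
    have e2 := intervalIntegral.integral_comp_sub_right (a := s) (b := t)
      (fun r => g (t - s - r) * u r) s
    simp only [sub_self, sub_sub, add_sub_cancel] at e2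
    simp only [sub_sub]
    rw [e2]
  have inner2 : ∀ q ∈ Ioc 0 t, ∫ s, g (t - q) * k s q ∂μ
      = g (t - q) * ∫ s in (0:ℝ)..q, u (q - s) * F s := by
    intro q hq
    have e1 : (fun s => k s q) = (Iio q).indicator (fun s => u (q - s) * F s) := by
      ext s
      by_cases h : s < q <;> simp [hk, h, indicator]
    have e3 : Ioc 0 t ∩ Iio q = Ioo 0 q := by
      ext s
      simp only [mem_inter_iff, mem_Ioc, mem_Iio, mem_Ioo]
      exact ⟨fun h => ⟨h.1.1, h.2⟩, fun h => ⟨⟨h.1, h.2.le.trans hq.2⟩, h.2⟩⟩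
    rw [integral_const_mul, e1, hμ, setIntegral_indicator measurableSet_Iio, e3,
      ← integral_Ioc_eq_integral_Ioo, ← intervalIntegral.integral_of_le hq.1.le]
  have mem : ∀ᵐ s ∂μ, s ∈ Ioc 0 t := ae_restrict_mem measurableSet_Ioc
  have I1 : Integrable (fun s => ∫ q, g (t - q) * k s q ∂μ) μ := H.integral_prod_left
  have I2 : Integrable (fun q => ∫ s, g (t - q) * k s q ∂μ) μ := H.integral_prod_right
  have I3 : Integrable (fun s => g (t - s) * F s) μ := by
    refine ag'.mul_bdd (c := N) hF_meas.aestronglyMeasurable ?_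
    filter_upwards [mem] with s hs
    exact hN s ⟨hs.1.le, hs.2⟩
  have ueq : ∀ᵐ s ∂μ, u (t - s) * F s = (∫ q, g (t - q) * k s q ∂μ) + g (t - s) * F s := by
    have h1 : ∀ᵐ s ∂(volume : Measure ℝ), 0 ≤ t - s →
        u (t - s) = (∫ r in (0:ℝ)..(t - s), g (t - s - r) * u r) + g (t - s) :=
      (Measure.measurePreserving_sub_left volume t).quasiMeasurePreserving.ae hu_eq
    filter_upwards [mem, ae_restrict_of_ae h1] with s hs h
    rw [inner1 s hs, h (by linarith [hs.2])]
    ring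
  have Deq : ∀ᵐ s ∂μ, g (t - s) * D s = g (t - s) * F s + ∫ r, g (t - s) * k r s ∂μ := by
    filter_upwards [mem] with s hs
    rw [inner2 s hs, hD s]
    ring
  rw [hD t, intervalIntegral.integral_of_le ht, intervalIntegral.integral_of_le ht,
    integral_congr_ae ueq, integral_congr_ae Deq, integral_add I1 I3, integral_add I3 I2, swap]
  ring
end

section
/- Uniqueness of locally bounded solutions of the renewal equation: let g be a nonnegative locally integrable function on [0,∞) with ∫₀^∞ g(x)dx ≤ 1, and let F be a measurable function on [0,∞) bounded on every compact interval. If D₁ and D₂ are measurable functions on [0,∞), each bounded on every compact interval, and each satisfies D(t) = ∫₀ᵗ g(t−s) D(s) ds + F(t) for all t ≥ 0, then D₁(t) = D₂(t) for all t ≥ 0. -/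
open MeasureTheory Set

lemma renewal_aux_int (g D : ℝ → ℝ)
    (hg_loc : ∀ T : ℝ, IntegrableOn g (Icc 0 T)) (hD : Measurable D)
    (hb : ∀ T : ℝ, ∃ M : ℝ, ∀ x ∈ Icc (0:ℝ) T, |D x| ≤ M) (t : ℝ) (ht : 0 ≤ t) :
    IntervalIntegrable (fun s => g (t - s) * D s) volume 0 t := by
  obtain ⟨M, hM⟩ := hb t
  have h1 : IntervalIntegrable g volume 0 t := by
    rw [intervalIntegrable_iff_integrableOn_Icc_of_le ht]
    exact hg_loc t
  have h2 : IntervalIntegrable (fun s => g (t - s)) volume 0 t := by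
    have := (h1.comp_sub_left t).symm
    simpa using this
  rw [intervalIntegrable_iff_integrableOn_Icc_of_le ht] at h2 ⊢
  refine Integrable.mul_bdd (c := M) h2 hD.aestronglyMeasurable ?_
  filter_upwards [ae_restrict_mem measurableSet_Icc] with x hx
  exact hM x hx

lemma renewal_aux_delta (g : ℝ → ℝ) (hg_loc : ∀ T : ℝ, IntegrableOn g (Icc 0 T)) :
    ∃ d > (0:ℝ), ∫ x in (0:ℝ)..d, g x ≤ 1 / 2 := by
  have h : ContinuousOn (fun x => ∫ t in (0:ℝ)..x, g t) (uIcc 0 1) := by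
    apply intervalIntegral.continuousOn_primitive_interval
    rw [uIcc_of_le zero_le_one]; exact hg_loc 1
  rw [uIcc_of_le zero_le_one] at h
  have h0 := h 0 (by simp)
  have h1 := Metric.continuousWithinAt_iff.1 h0 (1/2) (by norm_num)
  obtain ⟨d, hd, H⟩ := h1
  refine ⟨min (d/2) 1, by positivity, ?_⟩
  have hp : 0 < min (d/2) 1 := by positivity
  have := @H (min (d/2) 1) ⟨hp.le, min_le_right _ _⟩ (by
    rw [Real.dist_eq, sub_zero, abs_of_pos hp]
    have := min_le_left (d/2) 1
    linarith)
  rw [Real.dist_eq] at this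
  simp only [intervalIntegral.integral_same, sub_zero] at this
  exact (le_abs_self _).trans this.le

lemma renewal_aux_step (g E : ℝ → ℝ)
    (hg_nonneg : ∀ x ≥ (0:ℝ), 0 ≤ g x)
    (hg_loc : ∀ T : ℝ, IntegrableOn g (Icc 0 T)) (hE : Measurable E)
    (hb : ∀ T : ℝ, ∃ M : ℝ, ∀ x ∈ Icc (0:ℝ) T, |E x| ≤ M)
    (hE_eq : ∀ t ≥ (0:ℝ), E t = ∫ s in (0:ℝ)..t, g (t - s) * E s)
    (d : ℝ) (hd : 0 < d) (hgd : ∫ x in (0:ℝ)..d, g x ≤ 1 / 2)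
    (a : ℝ) (ha : 0 ≤ a) (hz : ∀ x ∈ Icc 0 a, E x = 0)
    (M : ℝ) (hM0 : 0 ≤ M) (hM : ∀ x ∈ Icc 0 (a + d), |E x| ≤ M) :
    ∀ x ∈ Icc 0 (a + d), |E x| ≤ M / 2 := by
  intro t ht
  rcases le_total t a with hta | hta
  · rw [hz t ⟨ht.1, hta⟩]; simp; positivity
  have hI := renewal_aux_int g E hg_loc hE hb t ht.1
  have hsub1 : uIcc 0 a ⊆ uIcc 0 t := by
    rw [uIcc_of_le ha, uIcc_of_le ht.1]; exact Icc_subset_Icc_right hta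
  have hsub2 : uIcc a t ⊆ uIcc 0 t := by
    rw [uIcc_of_le hta, uIcc_of_le ht.1]; exact Icc_subset_Icc_left ha
  have hg1 : ∀ T : ℝ, 0 ≤ T → IntervalIntegrable g volume 0 T := fun T hT => by
    rw [intervalIntegrable_iff_integrableOn_Icc_of_le hT]
    exact hg_loc T
  have hz1 : ∫ s in (0:ℝ)..a, g (t - s) * E s = 0 := by
    apply intervalIntegral.integral_zero_ae
    filter_upwards with x hx
    rw [uIoc_of_le ha] at hx
    rw [hz x ⟨hx.1.le, hx.2⟩, mul_zero]
  rw [hE_eq t ht.1, ← intervalIntegral.integral_add_adjacent_intervals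
    (hI.mono_set hsub1) (hI.mono_set hsub2), hz1, zero_add]
  have hgi : IntervalIntegrable (fun s => g (t - s) * M) volume a t := by
    have := ((hg1 (t - a) (by linarith)).comp_sub_left t).symm
    simp only [sub_zero, sub_sub_cancel] at this
    exact this.mul_const M
  have hle : ‖∫ s in a..t, g (t - s) * E s‖ ≤ ∫ s in a..t, g (t - s) * M := by
    apply intervalIntegral.norm_integral_le_of_norm_le hta _ hgi
    filter_upwards with x hx
    have h0 := hg_nonneg (t - x) (by linarith [hx.2])
    rw [norm_mul, Real.norm_of_nonneg h0]
    exact mul_le_mul_of_nonneg_left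
      (hM x ⟨by linarith [hx.1], by linarith [hx.2, ht.2]⟩) h0
  have heq : ∫ s in a..t, g (t - s) * M = (∫ x in (0:ℝ)..(t - a), g x) * M := by
    rw [intervalIntegral.integral_mul_const, intervalIntegral.integral_comp_sub_left]
    simp
  have hmono : ∫ x in (0:ℝ)..(t - a), g x ≤ ∫ x in (0:ℝ)..d, g x := by
    apply intervalIntegral.integral_mono_interval le_rfl (by linarith) (by linarith [ht.2]) _
      (hg1 d hd.le)
    filter_upwards [ae_restrict_mem measurableSet_Ioc] with x hx
    exact hg_nonneg x hx.1.le
  rw [heq] at hle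
  rw [Real.norm_eq_abs] at hle
  nlinarith

/-- Uniqueness of locally bounded solutions of the renewal equation `D = g ∗ D + F`
when `g` is a (sub-)probability density on `[0,∞)`. -/
theorem renewal_equation_uniqueness
    (g F D1 D2 : ℝ → ℝ)
    (hg_nonneg : ∀ x ≥ (0:ℝ), 0 ≤ g x)
    (hg_loc : ∀ T : ℝ, IntegrableOn g (Icc 0 T))
    (hg_int : IntegrableOn g (Ici 0))
    (hg_mass : ∫ x in Ici (0:ℝ), g x ≤ 1)
    (hF_meas : Measurable F)
    (hF_bdd : ∀ T : ℝ, ∃ M : ℝ, ∀ x ∈ Icc (0:ℝ) T, |F x| ≤ M)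
    (hD1_meas : Measurable D1)
    (hD1_bdd : ∀ T : ℝ, ∃ M : ℝ, ∀ x ∈ Icc (0:ℝ) T, |D1 x| ≤ M)
    (hD2_meas : Measurable D2)
    (hD2_bdd : ∀ T : ℝ, ∃ M : ℝ, ∀ x ∈ Icc (0:ℝ) T, |D2 x| ≤ M)
    (hD1_eq : ∀ t ≥ (0:ℝ), D1 t = (∫ s in (0:ℝ)..t, g (t - s) * D1 s) + F t)
    (hD2_eq : ∀ t ≥ (0:ℝ), D2 t = (∫ s in (0:ℝ)..t, g (t - s) * D2 s) + F t) :
    ∀ t ≥ (0:ℝ), D1 t = D2 t := by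
  obtain ⟨d, hd, hgd⟩ := renewal_aux_delta g hg_loc
  have hE : Measurable (fun x => D1 x - D2 x) := hD1_meas.sub hD2_meas
  have hb : ∀ T : ℝ, ∃ M : ℝ, ∀ x ∈ Icc (0:ℝ) T, |D1 x - D2 x| ≤ M := by
    intro T
    obtain ⟨M1, h1⟩ := hD1_bdd T
    obtain ⟨M2, h2⟩ := hD2_bdd T
    exact ⟨M1 + M2, fun x hx => (abs_sub _ _).trans (add_le_add (h1 x hx) (h2 x hx))⟩
  have hE_eq : ∀ t ≥ (0:ℝ), D1 t - D2 t = ∫ s in (0:ℝ)..t, g (t - s) * (D1 s - D2 s) := by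
    intro t ht
    simp only [mul_sub]
    rw [intervalIntegral.integral_sub (renewal_aux_int g D1 hg_loc hD1_meas hD1_bdd t ht)
      (renewal_aux_int g D2 hg_loc hD2_meas hD2_bdd t ht)]
    linarith [hD1_eq t ht, hD2_eq t ht]
  have key : ∀ n : ℕ, ∀ x ∈ Icc (0:ℝ) (n * d), D1 x - D2 x = 0 := by
    intro n
    induction n with
    | zero =>
      intro x hx
      have : x = 0 := by
        have h2 := hx.2
        simp at h2
        exact le_antisymm h2 hx.1
      subst this
      rw [hE_eq 0 le_rfl]; simp
    | succ n ih =>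
      have hnd : (((n + 1 : ℕ) : ℝ) * d) = n * d + d := by push_cast; ring
      rw [hnd]
      have hn0 : (0:ℝ) ≤ n * d := by positivity
      obtain ⟨M, hM⟩ := hb (n * d + d)
      have hM0 : 0 ≤ M := (abs_nonneg _).trans (hM 0 ⟨le_rfl, by linarith⟩)
      have hk : ∀ k : ℕ, ∀ x ∈ Icc (0:ℝ) (n * d + d), |D1 x - D2 x| ≤ M * (1/2) ^ k := by
        intro k
        induction k with
        | zero => simpa using hM
        | succ k ihk =>
          intro x hx
          have := renewal_aux_step g (fun x => D1 x - D2 x) hg_nonneg hg_loc hE hb hE_eq d hd hgd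
            (n * d) hn0 ih (M * (1/2) ^ k) (by positivity) ihk x hx
          refine this.trans (le_of_eq ?_)
          ring
      intro x hx
      have hlim : Filter.Tendsto (fun k : ℕ => M * (1/2 : ℝ) ^ k) Filter.atTop (nhds 0) := by
        simpa using (tendsto_pow_atTop_nhds_zero_of_lt_one (r := (1/2 : ℝ))
          (by norm_num) (by norm_num)).const_mul M
      have := ge_of_tendsto' hlim (fun k => hk k x hx)
      exact abs_nonpos_iff.1 this
  intro t ht
  obtain ⟨n, hn⟩ := exists_nat_ge (t / d)
  exact sub_eq_zero.1 (key n t ⟨ht, (div_le_iff₀ hd).1 hn⟩)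
end

section
/- Gronwall-type lemma for a countable coupled system: let λ be a nonnegative locally integrable function on [0,∞), let K ≥ 0, and let V_ℓ: [0,∞) → [0,2] (ℓ ≥ 1) be measurable functions such that for all t ≥ 0: V₁(t) ≤ K ∫₀ᵗ (1+λ(s))(V₁(s) + V₂(s)) ds, and for every ℓ ≥ 2, V_ℓ(t) ≤ K ∫₀ᵗ (1+λ(s))(V_{ℓ−1}(s) + V_ℓ(s) + V_{ℓ+1}(s)) ds. Then V_ℓ(t) = 0 for every ℓ ≥ 1 and every t ≥ 0. -/
open MeasureTheory Set

lemma gcs_bound (lam W : ℝ → ℝ) (a b s C : ℝ) (ha : 0 ≤ a) (has : a ≤ s) (hsb : s ≤ b)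
    (hlam_nonneg : ∀ t ≥ (0:ℝ), 0 ≤ lam t)
    (hlam_loc : ∀ T : ℝ, IntegrableOn lam (Icc 0 T))
    (hW0 : ∀ t, 0 ≤ t → t ≤ a → W t = 0)
    (hW : ∀ t, 0 ≤ t → t ≤ b → 0 ≤ W t ∧ W t ≤ C) :
    ∫ t in (0:ℝ)..s, (1 + lam t) * W t ≤ C * ∫ t in a..b, (1 + lam t) := by
  have hC : 0 ≤ C := by
    have := hW a ha (has.trans hsb)
    linarith
  have hint : IntegrableOn (fun t => 1 + lam t) (Icc 0 b) :=
    (integrableOn_const (by simp)).add (hlam_loc b)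
  have h1 : ∫ t in Ioc 0 s, (1 + lam t) * W t
      ≤ ∫ t in Ioc 0 s, (Ioi a).indicator (fun t => C * (1 + lam t)) t := by
    apply integral_mono_of_nonneg
    · filter_upwards [ae_restrict_mem measurableSet_Ioc] with t ht
      have := hlam_nonneg t ht.1.le
      have := (hW t ht.1.le (ht.2.trans hsb)).1
      show 0 ≤ (1 + lam t) * W t
      positivity
    · apply Integrable.indicator _ measurableSet_Ioi
      exact (hint.mono_set (fun t ht => ⟨ht.1.le, ht.2.trans hsb⟩)).const_mul C
    · filter_upwards [ae_restrict_mem measurableSet_Ioc] with t ht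
      have h2 := hlam_nonneg t ht.1.le
      by_cases hta : a < t
      · rw [indicator_of_mem (show t ∈ Ioi a from hta)]
        have := (hW t ht.1.le (ht.2.trans hsb)).2
        nlinarith
      · rw [indicator_of_notMem (show t ∉ Ioi a from hta), hW0 t ht.1.le (not_lt.1 hta)]
        simp
  rw [setIntegral_indicator measurableSet_Ioi, integral_const_mul] at h1
  rw [intervalIntegral.integral_of_le (ha.trans has),
    intervalIntegral.integral_of_le (has.trans hsb)]
  refine h1.trans (mul_le_mul_of_nonneg_left ?_ hC)
  apply setIntegral_mono_set
  · exact hint.mono_set (fun t ht => ⟨ha.trans ht.1.le, ht.2⟩)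
  · filter_upwards [ae_restrict_mem measurableSet_Ioc] with t ht
    have := hlam_nonneg t (ha.trans ht.1.le)
    show 0 ≤ 1 + lam t
    positivity
  · exact Filter.Eventually.of_forall (fun t ht => ⟨ht.2, ht.1.2.trans hsb⟩)

/-- Gronwall-type lemma for the countable coupled system of inequalities arising in the
uniqueness proof of the hydrodynamic PDE: the functions `V ℓ` must vanish identically. -/
theorem gronwall_countable_system
    (lam : ℝ → ℝ) (K : ℝ) (V : ℕ → ℝ → ℝ)
    (hK : 0 ≤ K)
    (hlam_nonneg : ∀ t ≥ (0:ℝ), 0 ≤ lam t)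
    (hlam_loc : ∀ T : ℝ, IntegrableOn lam (Icc 0 T))
    (hV_meas : ∀ ℓ ≥ 1, Measurable (V ℓ))
    (hV_range : ∀ ℓ ≥ 1, ∀ t ≥ (0:ℝ), V ℓ t ∈ Icc (0:ℝ) 2)
    (h_one : ∀ t ≥ (0:ℝ),
      V 1 t ≤ K * ∫ s in (0:ℝ)..t, (1 + lam s) * (V 1 s + V 2 s))
    (h_ell : ∀ ℓ ≥ 2, ∀ t ≥ (0:ℝ),
      V ℓ t ≤ K * ∫ s in (0:ℝ)..t, (1 + lam s) * (V (ℓ - 1) s + V ℓ s + V (ℓ + 1) s)) :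
    ∀ ℓ ≥ 1, ∀ t ≥ (0:ℝ), V ℓ t = 0 := by
  -- one step of the continuation
  have step : ∀ a b : ℝ, 0 ≤ a → a ≤ b → (∀ ℓ ≥ 1, ∀ t, 0 ≤ t → t ≤ a → V ℓ t = 0) →
      3 * K * (∫ t in a..b, (1 + lam t)) ≤ 1 / 2 →
      ∀ ℓ ≥ 1, ∀ t, 0 ≤ t → t ≤ b → V ℓ t = 0 := by
    intro a b ha hab h0 hsmall
    have key : ∀ n : ℕ, ∀ ℓ ≥ 1, ∀ t, 0 ≤ t → t ≤ b → V ℓ t ≤ 2 * (1 / 2) ^ n := by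
      intro n
      induction n with
      | zero => intro ℓ hℓ t ht _; simpa using (hV_range ℓ hℓ t ht).2
      | succ n ih =>
        intro ℓ hℓ t ht htb
        have hM : (0:ℝ) ≤ 2 * (1 / 2) ^ n := by positivity
        rcases le_total t a with hta | hta
        · rw [h0 ℓ hℓ t ht hta]; positivity
        set M : ℝ := 2 * (1 / 2) ^ n with hMdef
        have hgoal : (2:ℝ) * (1 / 2) ^ (n + 1) = M * (1 / 2) := by rw [hMdef]; ring
        rw [hgoal]
        have fin : ∀ W : ℝ → ℝ, (∀ t, 0 ≤ t → t ≤ a → W t = 0) →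
            (∀ t, 0 ≤ t → t ≤ b → 0 ≤ W t ∧ W t ≤ 3 * M) →
            K * ∫ s in (0:ℝ)..t, (1 + lam s) * W s ≤ M * (1 / 2) := by
          intro W hW0 hW
          have h := gcs_bound lam W a b t (3 * M) ha hta htb hlam_nonneg hlam_loc hW0 hW
          have h' := mul_le_mul_of_nonneg_left h hK
          have h'' := mul_le_mul_of_nonneg_left hsmall hM
          linarith
        rcases Nat.lt_or_ge ℓ 2 with h2 | h2
        · obtain rfl : ℓ = 1 := by omega
          refine (h_one t ht).trans (fin (fun s => V 1 s + V 2 s) ?_ ?_)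
          · intro s hs hsa
            simp [h0 1 le_rfl s hs hsa, h0 2 (by norm_num) s hs hsa]
          · intro s hs hsb
            have e1 := (hV_range 1 le_rfl s hs).1
            have e2 := (hV_range 2 (by norm_num) s hs).1
            have f1 := ih 1 le_rfl s hs hsb
            have f2 := ih 2 (by norm_num) s hs hsb
            constructor <;> linarith
        · refine (h_ell ℓ h2 t ht).trans (fin (fun s => V (ℓ - 1) s + V ℓ s + V (ℓ + 1) s) ?_ ?_)
          · intro s hs hsa
            simp [h0 ℓ hℓ s hs hsa, h0 (ℓ - 1) (by omega) s hs hsa,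
              h0 (ℓ + 1) (by omega) s hs hsa]
          · intro s hs hsb
            have e1 := (hV_range (ℓ - 1) (by omega) s hs).1
            have e2 := (hV_range ℓ hℓ s hs).1
            have e3 := (hV_range (ℓ + 1) (by omega) s hs).1
            have f1 := ih (ℓ - 1) (by omega) s hs hsb
            have f2 := ih ℓ hℓ s hs hsb
            have f3 := ih (ℓ + 1) (by omega) s hs hsb
            constructor <;> linarith
    intro ℓ hℓ t ht htb
    refine le_antisymm ?_ (hV_range ℓ hℓ t ht).1
    have hlim : Filter.Tendsto (fun n : ℕ => (2:ℝ) * (1 / 2) ^ n) Filter.atTop (nhds (2 * 0)) :=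
      (tendsto_pow_atTop_nhds_zero_of_lt_one (by norm_num) (by norm_num)).const_mul 2
    rw [mul_zero] at hlim
    exact ge_of_tendsto' hlim (fun n => key n ℓ hℓ t ht htb)
  intro ℓ hℓ T hT
  have hint : IntegrableOn (fun t => 1 + lam t) (Icc 0 T) :=
    (integrableOn_const (by simp)).add (hlam_loc T)
  have hcont : ContinuousOn (fun x => ∫ t in (0:ℝ)..x, (1 + lam t)) (Icc 0 T) := by
    have := intervalIntegral.continuousOn_primitive_interval (a := 0) (b := T) (μ := volume)
      (f := fun t => 1 + lam t) (by rwa [uIcc_of_le hT])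
    rwa [uIcc_of_le hT] at this
  have huc := isCompact_Icc.uniformContinuousOn_of_continuous hcont
  rw [Metric.uniformContinuousOn_iff] at huc
  have hε : 0 < 1 / (6 * K + 1) := by positivity
  obtain ⟨δ, hδ, hd⟩ := huc _ hε
  have main : ∀ n : ℕ, ∀ ℓ ≥ 1, ∀ t, 0 ≤ t → t ≤ min (n * (δ / 2)) T → V ℓ t = 0 := by
    intro n
    induction n with
    | zero =>
      intro ℓ hℓ t ht ht'
      have h00 : t = 0 := le_antisymm (by simpa using ht'.trans (min_le_left _ _)) ht
      subst h00
      refine le_antisymm ?_ (hV_range ℓ hℓ 0 le_rfl).1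
      rcases Nat.lt_or_ge ℓ 2 with h2 | h2
      · obtain rfl : ℓ = 1 := by omega
        simpa using h_one 0 le_rfl
      · simpa using h_ell ℓ h2 0 le_rfl
    | succ n ih =>
      have ha : 0 ≤ min ((n:ℝ) * (δ / 2)) T := le_min (by positivity) hT
      have hle : (n:ℝ) * (δ / 2) ≤ ((n + 1 : ℕ) : ℝ) * (δ / 2) := by push_cast; linarith
      have hab : min ((n:ℝ) * (δ / 2)) T ≤ min (((n + 1 : ℕ) : ℝ) * (δ / 2)) T :=
        min_le_min_right _ hle
      refine step _ _ ha hab ih ?_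
      have hdist : min (((n + 1 : ℕ) : ℝ) * (δ / 2)) T - min ((n:ℝ) * (δ / 2)) T < δ := by
        push_cast
        rcases le_total ((n:ℝ) * (δ / 2)) T with h | h
        · rw [min_eq_left h]
          have := min_le_left (((n:ℝ) + 1) * (δ / 2)) T
          linarith
        · rw [min_eq_right h]
          have := min_le_right (((n:ℝ) + 1) * (δ / 2)) T
          linarith
      have hbT : min (((n + 1 : ℕ) : ℝ) * (δ / 2)) T ≤ T := min_le_right _ _
      generalize min (((n + 1 : ℕ) : ℝ) * (δ / 2)) T = b at *
      generalize min ((n:ℝ) * (δ / 2)) T = a at *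
      have h := hd b ⟨ha.trans hab, hbT⟩ a ⟨ha, hab.trans hbT⟩
        (by rw [Real.dist_eq, abs_of_nonneg (by linarith)]; exact hdist)
      have hi : ∀ x, 0 ≤ x → x ≤ T → IntervalIntegrable (fun t => 1 + lam t) volume 0 x := by
        intro x hx hxT
        rw [intervalIntegrable_iff_integrableOn_Ioc_of_le hx]
        exact hint.mono_set (fun t ht => ⟨ht.1.le, ht.2.trans hxT⟩)
      rw [Real.dist_eq, intervalIntegral.integral_interval_sub_left
        (hi b (ha.trans hab) hbT) (hi a ha (hab.trans hbT))] at h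
      have h' := (le_abs_self _).trans h.le
      have h3 := mul_le_mul_of_nonneg_left h' (show 0 ≤ 3 * K by positivity)
      refine h3.trans ?_
      rw [mul_one_div, div_le_div_iff₀ (by positivity) (by norm_num)]
      linarith
  obtain ⟨n, hn⟩ := exists_nat_ge (T / (δ / 2))
  refine main n ℓ hℓ T hT (le_min ?_ le_rfl)
  rwa [div_le_iff₀ (by positivity)] at hn
end

section
/- Routing probability under SQ(2): let N ≥ 1, let X: Fin N → ℕ, and for ℓ ∈ ℕ let s(ℓ) = card{i : X(i) ≥ ℓ}. Equip Ω = Fin N × Fin N × Bool with the uniform probability measure, and define the routing map κ: Ω → Fin N by κ(i₁, i₂, b) = i₁ if X(i₁) < X(i₂), κ(i₁, i₂, b) = i₂ if X(i₂) < X(i₁), and, in case of a tie X(i₁) = X(i₂), κ(i₁, i₂, b) = i₁ if b = true and i₂ if b = false. Then for every server i with X(i) = ℓ, the probability of the event {κ = i} equals (s(ℓ) + s(ℓ+1))/N². -/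
open MeasureTheory

/-- Routing probability under SQ(2): sample two queues independently and uniformly at
random (with a uniform tie-breaking bit); for a server `i` of queue length `ℓ`, the
probability that the arriving job is routed to `i` is `(s ℓ + s (ℓ+1)) / N²`. -/
theorem sq2_routing_probability
    (N : ℕ) [NeZero N] (X : Fin N → ℕ) (s : ℕ → ℕ)
    (hs : ∀ ℓ : ℕ, s ℓ = (Finset.univ.filter fun i : Fin N => ℓ ≤ X i).card)
    (κ : Fin N × Fin N × Bool → Fin N)
    (hκ : ∀ (i₁ i₂ : Fin N) (b : Bool),
      κ (i₁, i₂, b) =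
        if X i₁ < X i₂ then i₁
        else if X i₂ < X i₁ then i₂
        else if b then i₁ else i₂)
    (i : Fin N) (ℓ : ℕ) (hi : X i = ℓ) :
    (PMF.uniformOfFintype (Fin N × Fin N × Bool)).toMeasure {ω | κ ω = i}
      = ((s ℓ : ENNReal) + (s (ℓ + 1) : ENNReal)) / (N : ENNReal) ^ 2 := by
  have hcard : Fintype.card {ω | κ ω = i} = 2 * (s ℓ + s (ℓ + 1)) := by
    have h1 : Fintype.card {ω | κ ω = i}
        = ∑ ω : Fin N × Fin N × Bool, if κ ω = i then 1 else 0 := by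
      rw [← Finset.card_filter, ← Fintype.card_subtype]
      exact Fintype.card_congr (Equiv.refl _)
    have key : ∀ i₁ i₂ : Fin N,
        ((if κ (i₁, i₂, true) = i then 1 else 0) + (if κ (i₁, i₂, false) = i then 1 else 0) : ℕ)
        = (if i₁ = i then ((if ℓ ≤ X i₂ then 1 else 0) + (if ℓ + 1 ≤ X i₂ then 1 else 0)) else 0)
        + (if i₂ = i then ((if ℓ ≤ X i₁ then 1 else 0) + (if ℓ + 1 ≤ X i₁ then 1 else 0)) else 0) := by
      intro i₁ i₂
      rw [hκ, hκ]
      grind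
    rw [h1, Fintype.sum_prod_type]
    simp_rw [Fintype.sum_prod_type, Fintype.sum_bool, key, Finset.sum_add_distrib]
    rw [Finset.sum_comm]
    simp only [Finset.sum_ite_eq', Finset.mem_univ, if_true, Finset.sum_add_distrib,
      ← Finset.card_filter, ← hs]
    ring
  rw [PMF.toMeasure_uniformOfFintype_apply _ (Set.toFinite _).measurableSet, hcard]
  simp only [Fintype.card_prod, Fintype.card_fin, Fintype.card_bool]
  push_cast
  rw [show (N : ENNReal) * (N * 2) = 2 * (N : ENNReal) ^ 2 by ring]
  exact ENNReal.mul_div_mul_left _ _ (by norm_num) (by norm_num)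
end
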